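/- arXiv:1401.6260 — 13 statements merged into one kernel-verified Lean document; each statement's English description precedes it below -/
import Mathlib

section
/- Suppose the protocol sequence set s_1, …, s_K is TI with MPR capability γ, where 1 ≤ γ < K. Then for every user i and all shifts (τ_1,…,τ_K), the throughput satisfies R_i(τ_1,…,τ_K) = f_i · Σ_{H ⊆ {1,…,K}∖{i}, |H| ≤ γ−1} ( ∏_{j ∈ H} f_j ) · ( ∏_{k ∈ {1,…,K}∖(H∪{i})} (1 − f_k) ), as an identity of rational numbers, where f_1,…,f_K are the duty factors. -/
open Finset

/-- Generalized Hamming cross-correlation of the sequences indexed by `A`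
(only the shifts `τ j` with `j ∈ A` matter). -/
def Hcorr {K L : ℕ} [NeZero L] (s : Fin K → ZMod L → ℕ)
    (A : Finset (Fin K)) (τ : Fin K → ZMod L) : ℕ :=
  ∑ t : ZMod L, ∏ j ∈ A, s j (t + τ j)

/-- The family `s` is shift-invariant (SI): every generalized Hamming
cross-correlation is independent of the relative shifts. -/
def IsSI {K L : ℕ} [NeZero L] (s : Fin K → ZMod L → ℕ) : Prop :=
  ∀ A : Finset (Fin K), A.Nonempty →
    ∀ τ τ' : Fin K → ZMod L, Hcorr s A τ = Hcorr s A τ'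

/-- Number of slots `t` in one period where user `i` transmits and at most
`γ - 1` other users transmit. -/
def Rcount {K L : ℕ} [NeZero L] (s : Fin K → ZMod L → ℕ) (γ : ℕ)
    (i : Fin K) (τ : Fin K → ZMod L) : ℕ :=
  (Finset.univ.filter (fun t : ZMod L =>
    s i (t + τ i) = 1 ∧ ∑ j ∈ Finset.univ.erase i, s j (t + τ j) ≤ γ - 1)).card

/-- Throughput of user `i` under MPR capability `γ` at shifts `τ`. -/
def R {K L : ℕ} [NeZero L] (s : Fin K → ZMod L → ℕ) (γ : ℕ)
    (i : Fin K) (τ : Fin K → ZMod L) : ℚ :=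
  (Rcount s γ i τ : ℚ) / L

/-- The family `s` is throughput-invariant (TI) with MPR capability `γ`. -/
def IsTI {K L : ℕ} [NeZero L] (s : Fin K → ZMod L → ℕ) (γ : ℕ) : Prop :=
  ∀ i : Fin K, ∀ τ τ' : Fin K → ZMod L, R s γ i τ = R s γ i τ'

/-- Duty factor of a single sequence. -/
def duty {L : ℕ} [NeZero L] (s : ZMod L → ℕ) : ℚ :=
  (∑ t : ZMod L, (s t : ℚ)) / L

/-- The throughput polynomial. -/
def tpoly {K : ℕ} (γ : ℕ) (i : Fin K) (a : Fin K → ℚ) : ℚ :=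
  a i * ∑ H ∈ (Finset.univ.erase i).powerset.filter (fun H => H.card ≤ γ - 1),
            (∏ j ∈ H, a j) * ∏ k ∈ (Finset.univ.erase i) \ H, (1 - a k)

lemma tpoly_ind {K : ℕ} (γ : ℕ) (i : Fin K) (b : Fin K → ℕ) (hb : ∀ j, b j = 0 ∨ b j = 1) :
    tpoly γ i (fun j => (b j : ℚ)) =
      if b i = 1 ∧ ∑ j ∈ Finset.univ.erase i, b j ≤ γ - 1 then 1 else 0 := by
  unfold tpoly
  rcases hb i with h0 | h1
  · simp [h0]
  set T := (Finset.univ.erase i).filter (fun j => b j = 1) with hT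
  have hsum : ∑ j ∈ Finset.univ.erase i, b j = T.card := by
    rw [hT, Finset.card_filter]
    apply Finset.sum_congr rfl
    intro j _
    rcases hb j with h | h <;> simp [h]
  have hterm : ∀ H ∈ (Finset.univ.erase i).powerset.filter (fun H => H.card ≤ γ - 1),
      (∏ j ∈ H, (b j : ℚ)) * ∏ k ∈ (Finset.univ.erase i) \ H, (1 - (b k : ℚ))
        = if H = T then 1 else 0 := by
    intro H hH
    have hHs : H ⊆ Finset.univ.erase i := Finset.mem_powerset.1 (Finset.mem_filter.1 hH).1
    split_ifs with hHT
    · rw [Finset.prod_eq_one, Finset.prod_eq_one, one_mul]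
      · intro k hk
        rcases hb k with h | h
        · simp [h]
        · exact absurd (by rw [hHT, hT]; exact Finset.mem_filter.2 ⟨(Finset.mem_sdiff.1 hk).1, h⟩)
            (Finset.mem_sdiff.1 hk).2
      · intro j hj
        rw [hHT, hT] at hj
        simp [(Finset.mem_filter.1 hj).2]
    · by_contra hne
      apply hHT
      have hn := mul_ne_zero_iff.1 hne
      rw [Finset.prod_ne_zero_iff, Finset.prod_ne_zero_iff] at hn
      ext j
      rw [hT, Finset.mem_filter]
      constructor
      · intro hj
        refine ⟨hHs hj, (hb j).resolve_left ?_⟩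
        intro h
        exact hn.1 j hj (by simp [h])
      · rintro ⟨hj, h⟩
        by_contra hjH
        exact hn.2 j (Finset.mem_sdiff.2 ⟨hj, hjH⟩) (by simp [h])
  rw [Finset.sum_congr rfl hterm, Finset.sum_ite_eq', hsum]
  simp [h1, hT]

lemma tpoly_prod {K : ℕ} (γ : ℕ) (i : Fin K) (a : Fin K → ℚ) :
    tpoly γ i a = ∑ H ∈ (Finset.univ.erase i).powerset.filter (fun H => H.card ≤ γ - 1),
      ∏ j, (if j = i ∨ j ∈ H then a j else 1 - a j) := by
  unfold tpoly
  rw [Finset.mul_sum]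
  apply Finset.sum_congr rfl
  intro H hH
  have hHs : H ⊆ Finset.univ.erase i := Finset.mem_powerset.1 (Finset.mem_filter.1 hH).1
  rw [← Finset.mul_prod_erase _ _ (Finset.mem_univ i), ← Finset.prod_sdiff hHs]
  simp only [true_or, if_true]
  rw [mul_comm (∏ j ∈ H, a j)]
  congr 2
  · apply Finset.prod_congr rfl
    intro k hk
    simp only [Finset.mem_sdiff, Finset.mem_erase] at hk
    simp [hk.1.1, hk.2]
  · apply Finset.prod_congr rfl
    intro k hk
    simp [hk]

lemma tpoly_avg {K L : ℕ} [NeZero L] (γ : ℕ) (i : Fin K) (s : Fin K → ZMod L → ℕ) :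
    ∑ τ : Fin K → ZMod L, tpoly γ i (fun j => (s j (τ j) : ℚ))
      = (L : ℚ) ^ K * tpoly γ i (fun j => duty (s j)) := by
  have hL : (L : ℚ) ≠ 0 := Nat.cast_ne_zero.2 (NeZero.ne L)
  simp only [tpoly_prod]
  rw [Finset.sum_comm, Finset.mul_sum]
  apply Finset.sum_congr rfl
  intro H _
  have h := Finset.prod_univ_sum (fun _ : Fin K => (Finset.univ : Finset (ZMod L)))
    (fun j x => if j = i ∨ j ∈ H then (s j x : ℚ) else 1 - (s j x : ℚ))
  rw [Fintype.piFinset_univ] at h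
  rw [← h]
  have hc : (L : ℚ) ^ K = ∏ _j : Fin K, (L : ℚ) := by simp
  rw [hc, ← Finset.prod_mul_distrib]
  apply Finset.prod_congr rfl
  intro j _
  unfold duty
  split_ifs
  · field_simp
  · rw [Finset.sum_sub_distrib]
    simp only [Finset.sum_const, Finset.card_univ, ZMod.card, nsmul_eq_mul, mul_one]
    field_simp

theorem stmt1 (K L γ : ℕ) (hK : 2 ≤ K) (hL : 1 ≤ L) [NeZero L]
    (s : Fin K → ZMod L → ℕ) (hbin : ∀ i t, s i t = 0 ∨ s i t = 1)
    (hγ1 : 1 ≤ γ) (hγK : γ < K) (hTI : IsTI s γ) :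
    ∀ (i : Fin K) (τ : Fin K → ZMod L),
      R s γ i τ
        = duty (s i) *
          ∑ H ∈ (Finset.univ.erase i).powerset.filter (fun H => H.card ≤ γ - 1),
            (∏ j ∈ H, duty (s j)) *
              ∏ k ∈ (Finset.univ.erase i) \ H, (1 - duty (s k)) := by
  intro i τ
  change R s γ i τ = tpoly γ i (fun j => duty (s j))
  have hL0 : (L : ℚ) ≠ 0 := Nat.cast_ne_zero.2 (NeZero.ne L)
  have hR : ∀ τ' : Fin K → ZMod L,
      R s γ i τ' * L = ∑ t : ZMod L, tpoly γ i (fun j => (s j (t + τ' j) : ℚ)) := by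
    intro τ'
    unfold R Rcount
    rw [div_mul_cancel₀ _ hL0, Finset.card_filter, Nat.cast_sum]
    apply Finset.sum_congr rfl
    intro t _
    rw [tpoly_ind γ i (fun j => s j (t + τ' j)) (fun j => hbin j _)]
    push_cast
    rfl
  have h1 : ∑ τ' : Fin K → ZMod L, R s γ i τ' * L = (L : ℚ) ^ K * (R s γ i τ * L) := by
    rw [Finset.sum_congr rfl (fun τ' _ => by rw [hTI i τ' τ])]
    simp [ZMod.card]
  have h2 : ∑ τ' : Fin K → ZMod L, R s γ i τ' * L
      = L * ((L : ℚ) ^ K * tpoly γ i (fun j => duty (s j))) := by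
    rw [Finset.sum_congr rfl (fun τ' _ => hR τ'), Finset.sum_comm, ← tpoly_avg]
    have h3 : ∀ t : ZMod L,
        ∑ τ' : Fin K → ZMod L, tpoly γ i (fun j => (s j (t + τ' j) : ℚ))
          = ∑ τ' : Fin K → ZMod L, tpoly γ i (fun j => (s j (τ' j) : ℚ)) := fun t =>
      Fintype.sum_equiv (Equiv.addLeft (fun _ : Fin K => t)) _ _ (fun τ' => rfl)
    rw [Finset.sum_congr rfl (fun t _ => h3 t)]
    simp [ZMod.card]
  rw [h1] at h2
  have h4 : ((L : ℚ) ^ K * L) ≠ 0 := by positivity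
  apply mul_left_cancel₀ h4
  linarith
end

section
/- Suppose the protocol sequence set s_1, …, s_K is TI with MPR capability γ, where 1 ≤ γ < K, and that R_i > 0 for every user i. Then the number of indices i such that s_i is the all-one sequence (s_i(t) = 1 for every t ∈ ZMod L) is at most γ − 1. -/
open Finset

theorem stmt2 (K L γ : ℕ) (hK : 2 ≤ K) (hL : 1 ≤ L) [NeZero L]
    (s : Fin K → ZMod L → ℕ) (hbin : ∀ i t, s i t = 0 ∨ s i t = 1)
    (hγ1 : 1 ≤ γ) (hγK : γ < K) (hTI : IsTI s γ)
    (hR : ∀ (i : Fin K) (τ : Fin K → ZMod L), 0 < R s γ i τ) :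
    (Finset.univ.filter (fun i : Fin K => ∀ t : ZMod L, s i t = 1)).card ≤ γ - 1 := by
  by_contra hcon
  have hle : γ ≤ (Finset.univ.filter (fun i : Fin K => ∀ t : ZMod L, s i t = 1)).card := by
    omega
  obtain ⟨B, hBA, hBc⟩ := Finset.exists_subset_card_eq hle
  obtain ⟨i, hi⟩ : ∃ i, i ∉ B := by
    by_contra h
    push Not at h
    have hB : B = Finset.univ := Finset.eq_univ_iff_forall.mpr h
    rw [hB, Finset.card_univ, Fintype.card_fin] at hBc
    omega
  have h0 : Rcount s γ i 0 = 0 := by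
    unfold Rcount
    rw [Finset.card_eq_zero, Finset.filter_eq_empty_iff]
    rintro t - ⟨-, h⟩
    have hsub : B ⊆ Finset.univ.erase i := fun j hj =>
      Finset.mem_erase.mpr ⟨fun e => hi (e ▸ hj), Finset.mem_univ _⟩
    have h1 : ∑ j ∈ B, s j (t + (0 : Fin K → ZMod L) j)
        ≤ ∑ j ∈ Finset.univ.erase i, s j (t + (0 : Fin K → ZMod L) j) :=
      Finset.sum_le_sum_of_subset hsub
    have h2 : ∑ j ∈ B, s j (t + (0 : Fin K → ZMod L) j) = ∑ j ∈ B, 1 :=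
      Finset.sum_congr rfl fun j hj => (Finset.mem_filter.mp (hBA hj)).2 _
    rw [Finset.sum_const, hBc, smul_eq_mul, mul_one] at h2
    omega
  have hp := hR i 0
  simp [R, h0] at hp
end

section
/- Let γ be any integer with 1 ≤ γ < K. If the protocol sequence set s_1, …, s_K is TI with MPR capability γ and R_i > 0 for every user i, then the sequence set is pairwise SI, i.e., for every pair of distinct indices i < j the pairwise Hamming cross-correlation Σ_{t ∈ ZMod L} s_i(t+τ_i)·s_j(t+τ_j) is independent of the shifts τ_i, τ_j. -/
open Finset

/-- Some choice of shifts makes exactly `γ - 1` of the users in `E` active. -/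
theorem exists_exact {K L : ℕ} (s : Fin K → ZMod L → ℕ) (hbin : ∀ i t, s i t = 0 ∨ s i t = 1)
    (E : Finset (Fin K)) (n : ℕ) (hn : n ≤ E.card) (v u : Fin K → ZMod L)
    (hv : ∑ k ∈ E, s k (v k) ≤ n) (hu : ∀ k, s k (u k) = 1) :
    ∃ σ : Fin K → ZMod L, ∑ k ∈ E, s k (σ k) = n := by
  classical
  have hZ : (E.filter (fun k => s k (v k) = 1)).card ≤ n := by
    rw [Finset.card_filter]
    refine le_trans (Finset.sum_le_sum ?_) hv
    intro k _
    rcases hbin k (v k) with h | h <;> simp [h]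
  obtain ⟨W, hZW, hWE, hW⟩ :=
    Finset.exists_subsuperset_card_eq (Finset.filter_subset _ E) hZ hn
  refine ⟨fun k => if k ∈ W then u k else v k, ?_⟩
  have : ∀ k ∈ E, s k (if k ∈ W then u k else v k) = if k ∈ W then 1 else 0 := by
    intro k hk
    by_cases h : k ∈ W
    · simp [h, hu]
    · rcases hbin k (v k) with h0 | h1
      · simp [h, h0]
      · exact absurd (hZW (by simp [hk, h1])) h
  rw [Finset.sum_congr rfl this, ← Finset.sum_filter, Finset.sum_const, smul_eq_mul, mul_one,
    Finset.filter_mem_eq_inter, Finset.inter_eq_right.2 hWE, hW]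

/-- Averaging the throughput of user `i` over all shifts of the users other than `i`, `j`. -/
theorem avg_identity {K L : ℕ} [NeZero L] (s : Fin K → ZMod L → ℕ)
    (hbin : ∀ i t, s i t = 0 ∨ s i t = 1) (γ : ℕ) (i j : Fin K) (hij : i ≠ j) (a b : ZMod L) :
    (∑ σ : Fin K → ZMod L, Rcount s γ i (Function.update (Function.update σ i a) j b))
      + (∑ t : ZMod L, s i (t + a) * s j (t + b)) *
        (Finset.univ.filter (fun σ : Fin K → ZMod L =>
          ∑ k ∈ (Finset.univ.erase i).erase j, s k (σ k) = γ - 1)).card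
      = (∑ t : ZMod L, s i t) *
        (Finset.univ.filter (fun σ : Fin K → ZMod L =>
          ∑ k ∈ (Finset.univ.erase i).erase j, s k (σ k) ≤ γ - 1)).card := by
  have hs : (∑ t : ZMod L, s i t) = ∑ t : ZMod L, s i (t + a) :=
    (Equiv.sum_comp (Equiv.addRight a) (s i)).symm
  have hsum : ∀ (σ : Fin K → ZMod L) (t : ZMod L),
      ∑ k ∈ Finset.univ.erase i, s k (t + Function.update (Function.update σ i a) j b k)
        = s j (t + b) + ∑ k ∈ (Finset.univ.erase i).erase j, s k (t + σ k) := by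
    intro σ t
    rw [← Finset.add_sum_erase _ _ (show j ∈ Finset.univ.erase i by simp [hij.symm])]
    congr 1
    · simp
    · refine Finset.sum_congr rfl ?_
      intro k hk
      simp only [Finset.mem_erase, Finset.mem_univ, and_true] at hk
      rw [Function.update_of_ne hk.1, Function.update_of_ne hk.2]
  have hi : ∀ σ : Fin K → ZMod L, Function.update (Function.update σ i a) j b i = a := by
    intro σ
    rw [Function.update_of_ne hij, Function.update_self]
  rw [hs]
  simp only [Rcount, hsum, hi, Finset.card_filter]
  rw [Finset.sum_comm, Finset.sum_mul, Finset.sum_mul, ← Finset.sum_add_distrib]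
  refine Finset.sum_congr rfl ?_
  intro t _
  have hshift := Equiv.sum_comp (Equiv.addLeft (fun _ : Fin K => t)) (fun σ : Fin K → ZMod L =>
    if s i (t + a) = 1 ∧ s j (t + b) + ∑ k ∈ (Finset.univ.erase i).erase j, s k (σ k) ≤ γ - 1
      then (1 : ℕ) else 0)
  simp only [Equiv.coe_addLeft, Pi.add_apply] at hshift
  refine Eq.trans (congrArg (fun y => y + _) (Eq.trans
    (Finset.sum_congr rfl (fun σ _ => if_congr Iff.rfl rfl rfl)) hshift)) ?_
  rw [Finset.mul_sum, Finset.mul_sum, ← Finset.sum_add_distrib]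
  refine Finset.sum_congr rfl ?_
  intro σ _
  generalize ∑ k ∈ (Finset.univ.erase i).erase j, s k (σ k) = x
  rcases hbin i (t + a) with h1 | h1 <;> rcases hbin j (t + b) with h2 | h2 <;>
    (clear hshift; simp only [h1, h2]; grind)

theorem stmt3 (K L γ : ℕ) (hK : 2 ≤ K) (hL : 1 ≤ L) [NeZero L]
    (s : Fin K → ZMod L → ℕ) (hbin : ∀ i t, s i t = 0 ∨ s i t = 1)
    (hγ1 : 1 ≤ γ) (hγK : γ < K) (hTI : IsTI s γ)
    (hR : ∀ (i : Fin K) (τ : Fin K → ZMod L), 0 < R s γ i τ) :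
    ∀ i j : Fin K, i < j → ∀ τi τj τi' τj' : ZMod L,
      ∑ t : ZMod L, s i (t + τi) * s j (t + τj)
        = ∑ t : ZMod L, s i (t + τi') * s j (t + τj') := by
  intro i j hlt a b a' b'
  classical
  have hij : i ≠ j := ne_of_lt hlt
  have hL0 : (L : ℚ) ≠ 0 := by exact_mod_cast NeZero.ne L
  have hconst : ∀ τ τ', Rcount s γ i τ = Rcount s γ i τ' := by
    intro τ τ'
    have h := hTI i τ τ'
    unfold R at h
    rw [div_left_inj' hL0] at h
    exact_mod_cast h
  have hpos : ∀ k, ∃ t : ZMod L,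
      s k t = 1 ∧ ∑ l ∈ Finset.univ.erase k, s l t ≤ γ - 1 := by
    intro k
    have h := hR k (fun _ => 0)
    have h0 : Rcount s γ k (fun _ => 0) ≠ 0 := by
      intro h0
      simp [R, h0] at h
    obtain ⟨t, ht⟩ := Finset.card_pos.1 (Nat.pos_of_ne_zero h0)
    exact ⟨t, by simpa using ht⟩
  choose u hu using hpos
  have hcard : γ - 1 ≤ ((Finset.univ.erase i).erase j).card := by
    rw [Finset.card_erase_of_mem (by simp [hij.symm]), Finset.card_erase_of_mem (by simp),
      Finset.card_univ, Fintype.card_fin]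
    omega
  obtain ⟨σ, hσ⟩ := exists_exact s hbin ((Finset.univ.erase i).erase j) (γ - 1) hcard
    (fun _ => u i) u
    (le_trans (Finset.sum_le_sum_of_subset (Finset.erase_subset _ _)) (hu i).2)
    (fun k => (hu k).1)
  have hN : 0 < (Finset.univ.filter (fun σ : Fin K → ZMod L =>
          ∑ k ∈ (Finset.univ.erase i).erase j, s k (σ k) = γ - 1)).card :=
    Finset.card_pos.2 ⟨σ, by simpa using hσ⟩
  have e1 := avg_identity s hbin γ i j hij a b
  have e2 := avg_identity s hbin γ i j hij a' b'
  have e3 : (∑ σ : Fin K → ZMod L, Rcount s γ i (Function.update (Function.update σ i a) j b))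
      = ∑ σ : Fin K → ZMod L, Rcount s γ i (Function.update (Function.update σ i a') j b') :=
    Finset.sum_congr rfl (fun _ _ => hconst _ _)
  rw [← e2, e3] at e1
  exact Nat.eq_of_mul_eq_mul_right hN (Nat.add_left_cancel e1)
end

section
/- Let γ be an integer with 1 ≤ γ < K. Suppose the protocol sequence set s_1, …, s_K is TI with MPR capability γ, R_i > 0 for every user i, and the duty factor of each s_i equals n_i/d_i where n_i, d_i are positive integers with gcd(n_i, d_i) = 1. Then the common period L is divisible by the product d_1 · d_2 ⋯ d_K. -/
open Finset

open Polynomial in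
lemma rr_D (p : ℝ[X]) (hp : p.Splits) : p.coeff 0 ≠ 0 →
    0 ≤ p.coeff 1 ^ 2 - 2 * p.coeff 0 * p.coeff 2 ∧
    (p.coeff 1 ^ 2 - 2 * p.coeff 0 * p.coeff 2 = 0 → p.natDegree = 0) := by
  unfold Polynomial.Splits at hp
  induction hp using Submonoid.closure_induction with
  | mem x hx =>
    rcases hx with ⟨a, rfl⟩ | ⟨a, rfl⟩
    · intro _
      simp [coeff_C]
    · intro _
      simp [coeff_X, coeff_C]
  | one => intro _; simp [coeff_one]
  | mul p q _ _ ihp ihq =>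
    intro h
    have h0 : (p * q).coeff 0 = p.coeff 0 * q.coeff 0 := by simp [mul_coeff_zero]
    have h1 : (p * q).coeff 1 = p.coeff 0 * q.coeff 1 + p.coeff 1 * q.coeff 0 := by
      rw [coeff_mul, Finset.Nat.sum_antidiagonal_eq_sum_range_succ_mk]
      simp [Finset.sum_range_succ]
    have h2 : (p * q).coeff 2 = p.coeff 0 * q.coeff 2 + p.coeff 1 * q.coeff 1
        + p.coeff 2 * q.coeff 0 := by
      rw [coeff_mul, Finset.Nat.sum_antidiagonal_eq_sum_range_succ_mk]
      simp [Finset.sum_range_succ]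
    rw [h0] at h
    have hp0 := left_ne_zero_of_mul h
    have hq0 := right_ne_zero_of_mul h
    obtain ⟨a1, a2⟩ := ihp hp0
    obtain ⟨b1, b2⟩ := ihq hq0
    have key : (p * q).coeff 1 ^ 2 - 2 * (p * q).coeff 0 * (p * q).coeff 2
        = (p.coeff 1 ^ 2 - 2 * p.coeff 0 * p.coeff 2) * q.coeff 0 ^ 2
        + (q.coeff 1 ^ 2 - 2 * q.coeff 0 * q.coeff 2) * p.coeff 0 ^ 2 := by
      rw [h0, h1, h2]; ring
    rw [key]
    have hp2 : 0 < p.coeff 0 ^ 2 := by positivity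
    have hq2 : 0 < q.coeff 0 ^ 2 := by positivity
    refine ⟨by positivity, fun h => ?_⟩
    rw [add_eq_zero_iff_of_nonneg (by positivity) (by positivity)] at h
    have e1 := a2 ((mul_eq_zero.1 h.1).resolve_right hq2.ne')
    have e2 := b2 ((mul_eq_zero.1 h.2).resolve_right hp2.ne')
    have := natDegree_mul_le (p := p) (q := q)
    omega

open Polynomial in
lemma rr_deriv (p : ℝ[X]) (hp : p.Splits) : (derivative p).Splits := by
  rw [splits_iff_card_roots] at hp ⊢
  have h1 := card_roots_le_derivative p
  have h2 := card_roots' (derivative p)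
  have h3 := natDegree_derivative_le p
  omega

open Polynomial in
lemma rr_iter (p : ℝ[X]) (hp : p.Splits) (k : ℕ) : (derivative^[k] p).Splits := by
  induction k with
  | zero => simpa
  | succ k ih => rw [Function.iterate_succ_apply']; exact rr_deriv _ ih

open Polynomial in
lemma rr_gap (p : ℝ[X]) (hp : p.Splits) (k : ℕ) (h0 : p.coeff k = 0) (h1 : p.coeff (k + 1) = 0)
    (hl : ∃ l ≤ k, p.coeff l ≠ 0) : p.natDegree < k := by
  classical
  obtain ⟨l0, hl0, hl0'⟩ := hl
  set l := Nat.findGreatest (fun l => p.coeff l ≠ 0) k with hldef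
  have hlk : l ≤ k := Nat.findGreatest_le k
  have hlne : p.coeff l ≠ 0 := Nat.findGreatest_spec (P := fun l => p.coeff l ≠ 0) hl0 hl0'
  have hmax : ∀ m, l < m → m ≤ k → p.coeff m = 0 := fun m hm hmk => by
    by_contra hc
    exact Nat.findGreatest_is_greatest hm hmk hc
  have hlk' : l < k := lt_of_le_of_ne hlk (fun h => hlne (h ▸ h0))
  have z1 : p.coeff (l + 1) = 0 := hmax _ (by omega) (by omega)
  have z2 : p.coeff (l + 2) = 0 := by
    by_cases h : l + 2 ≤ k
    · exact hmax _ (by omega) h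
    · have : l + 2 = k + 1 := by omega
      rw [this, h1]
  have hs := rr_D _ (rr_iter p hp l)
  simp only [coeff_iterate_derivative] at hs
  have e1 : p.coeff (1 + l) = 0 := by rw [add_comm]; exact z1
  have e2 : p.coeff (2 + l) = 0 := by rw [add_comm]; exact z2
  rw [e1, e2] at hs
  have hd := (hs (by simp [hlne, Nat.descFactorial_self, Nat.factorial_ne_zero])).2 (by simp)
  have : p.natDegree ≤ l := by
    rw [natDegree_le_iff_coeff_eq_zero]
    intro m hm
    have hz : (derivative^[l] p).coeff (m - l) = 0 :=
      coeff_eq_zero_of_natDegree_lt (by omega)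
    rw [coeff_iterate_derivative, Nat.sub_add_cancel hm.le] at hz
    have hne : m.descFactorial l ≠ 0 := by
      rw [Ne, Nat.descFactorial_eq_zero_iff_lt]; omega
    simpa [hne] using hz
  omega

open Polynomial in
noncomputable def lam (γ : ℕ) : ℝ[X] →ₗ[ℝ] ℝ := ∑ k ∈ Finset.range γ, lcoeff ℝ k

open Polynomial in
lemma lam_apply (γ : ℕ) (p : ℝ[X]) : lam γ p = ∑ k ∈ Finset.range γ, p.coeff k := by
  simp [lam]

open Polynomial in
lemma lam_X_sub (g : ℕ) (q : ℝ[X]) : lam (g + 1) ((X - 1) * q) = - q.coeff g := by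
  rw [lam_apply]
  induction g with
  | zero => simp [sub_mul]
  | succ g ih =>
    rw [Finset.sum_range_succ, ih]
    simp [sub_mul, coeff_X_mul]; ring

open Polynomial in
lemma lam_C_mul (γ : ℕ) (a : ℝ) (q : ℝ[X]) : lam γ (C a * q) = a * lam γ q := by
  rw [← smul_eq_C_mul, map_smul, smul_eq_mul]

open Polynomial in
noncomputable def vv {K : ℕ} (i j : Fin K) : ℝ[X] := if j = i then 1 else X - 1
open Polynomial in
noncomputable def uu {K : ℕ} (f : Fin K → ℝ) (i j : Fin K) : ℝ[X] :=
  if j = i then C (f i) else 1 + C (f j) * (X - 1)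
open Polynomial in
noncomputable def cB {K : ℕ} (f : Fin K → ℝ) (γ : ℕ) (i : Fin K) (B : Finset (Fin K)) : ℝ :=
  lam γ ((∏ j ∈ B, vv i j) * ∏ j ∈ univ \ B, uu f i j)

open Polynomial in
lemma cB_ne {K : ℕ} (f : Fin K → ℝ) (γ : ℕ) (hK : 2 ≤ K) (hγ1 : 1 ≤ γ) (hγK : γ < K)
    (hf : ∀ i, f i ≠ 0) (h0 : ∀ i, cB f γ i ∅ ≠ 0) (B : Finset (Fin K)) (hB : B.Nonempty) :
    ∃ i, cB f γ i B ≠ 0 := by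
  classical
  obtain ⟨g, rfl⟩ : ∃ g, γ = g + 1 := ⟨γ - 1, by omega⟩
  by_contra! hall
  obtain ⟨j, hj⟩ := hB
  have hvB : ∏ k ∈ B, vv j k = (X - 1 : ℝ[X]) ^ (#B - 1) := by
    rw [← Finset.mul_prod_erase _ _ hj]
    rw [Finset.prod_congr rfl (g := fun _ => (X - 1 : ℝ[X]))]
    · simp [vv, Finset.card_erase_of_mem hj]
    · intro k hk; simp [vv, Finset.ne_of_mem_erase hk]
  by_cases hU : B = univ
  · subst hU
    have := hall j
    simp only [cB, hvB] at this
    simp only [Finset.card_univ, Fintype.card_fin, sdiff_self] at this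
    obtain ⟨k, rfl⟩ : ∃ k, K = k + 2 := ⟨K - 2, by omega⟩
    rw [show k + 2 - 1 = k + 1 by omega, pow_succ', mul_assoc, lam_X_sub] at this
    have e : (X - 1 : ℝ[X]) = X - C 1 := by simp
    rw [e] at this
    simp only [Finset.bot_eq_empty, Finset.prod_empty, mul_one, neg_eq_zero] at this
    rw [sub_eq_add_neg, ← C_neg, coeff_X_add_C_pow] at this
    have hc : (k.choose g : ℝ) ≠ 0 := by
      have := Nat.choose_pos (n := k) (k := g) (by omega)
      positivity
    simp [hc] at this
  obtain ⟨i, hi⟩ : ∃ i, i ∉ B := by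
    by_contra! h; exact hU (Finset.eq_univ_iff_forall.2 h)
  set S := (univ \ B).erase i with hS
  have hiS : i ∈ univ \ B := by simp [hi]
  set Y : ℝ[X] := ∏ k ∈ S, (1 + C (f k) * (X - 1)) with hY
  have hci := hall i
  have hcj := hall j
  have hij : i ≠ j := fun h => hi (h ▸ hj)
  have hvi : ∏ k ∈ B, vv i k = (X - 1 : ℝ[X]) ^ #B := by
    rw [Finset.prod_congr rfl (g := fun _ => (X - 1 : ℝ[X]))]
    · simp
    · intro k hk; simp [vv, show k ≠ i from fun h => hi (h ▸ hk)]
  have hui : ∏ k ∈ univ \ B, uu f i k = C (f i) * Y := by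
    rw [← Finset.mul_prod_erase _ _ hiS, hY]
    congr 1
    · simp [uu]
    · exact Finset.prod_congr rfl fun k hk => by simp [uu, Finset.ne_of_mem_erase hk]
  have huj : ∏ k ∈ univ \ B, uu f j k = (1 + C (f i) * (X - 1)) * Y := by
    rw [← Finset.mul_prod_erase _ _ hiS, hY]
    congr 1
    · simp [uu, hij]
    · refine Finset.prod_congr rfl fun k hk => ?_
      have : k ∉ B := by simp [hS] at hk; exact hk.2
      simp [uu, show k ≠ j from fun h => this (h ▸ hj)]
  have hm : 1 ≤ #B := Finset.card_pos.2 ⟨j, hj⟩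
  obtain ⟨m, hmB⟩ : ∃ m, #B = m + 1 := ⟨#B - 1, by omega⟩
  rw [cB, hvi, hui, mul_left_comm, lam_C_mul, hmB] at hci
  have hci' := (mul_eq_zero.1 hci).resolve_left (hf i)
  rw [cB, hvB, huj, hmB, Nat.add_sub_cancel, show (X - 1 : ℝ[X]) ^ m * ((1 + C (f i) * (X - 1)) * Y)
    = (X - 1) ^ m * Y + C (f i) * ((X - 1) ^ (m + 1) * Y) by ring, map_add, lam_C_mul, hci', mul_zero,
    add_zero] at hcj
  -- the full product for `i`
  have h0i := h0 i
  have hfull : ∏ k ∈ univ \ ∅, uu f i k =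
      C (f i) * ((∏ k ∈ B, (1 + C (f k) * (X - 1))) * Y) := by
    have hBu : ∏ k ∈ B, uu f i k = ∏ k ∈ B, (1 + C (f k) * (X - 1)) :=
      Finset.prod_congr rfl fun k hk => by simp [uu, show k ≠ i from fun h => hi (h ▸ hk)]
    rw [Finset.sdiff_empty, ← Finset.prod_sdiff (Finset.subset_univ B), hui, hBu]
    ring
  rw [cB, hfull, Finset.prod_empty, one_mul, lam_C_mul] at h0i
  have h0i' := right_ne_zero_of_mul h0i
  rcases Nat.eq_zero_or_pos m with rfl | hmpos
  · have : B = {j} := by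
      obtain ⟨a, ha⟩ := Finset.card_eq_one.1 hmB
      rw [ha] at hj ⊢; simp at hj; rw [hj]
    apply h0i'
    rw [this, Finset.prod_singleton, add_mul, one_mul, mul_assoc, map_add, lam_C_mul]
    simp at hcj hci'
    rw [hcj, hci']; simp
  obtain ⟨r, rfl⟩ : ∃ r, m = r + 1 := ⟨m - 1, by omega⟩
  set Q : ℝ[X] := (X - 1) ^ r * Y with hQ
  have q1 : Q.coeff g = 0 := by
    rw [pow_succ', mul_assoc, lam_X_sub] at hcj; simpa using hcj
  have q2 : ((X - 1) * Q).coeff g = 0 := by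
    rw [pow_succ', pow_succ', mul_assoc, lam_X_sub, mul_assoc] at hci'; simpa using hci'
  have hexl : ∃ l ≤ g, Q.coeff l ≠ 0 := by
    by_contra! hc
    have hd : X ^ (g + 1) ∣ Q := X_pow_dvd_iff.2 fun d hd => hc d (by omega)
    have hcop : IsCoprime (X ^ (g + 1) : ℝ[X]) ((X - 1) ^ r) := by
      apply IsCoprime.pow
      exact ⟨1, -1, by ring⟩
    have hdY : X ^ (g + 1) ∣ Y := hcop.dvd_of_dvd_mul_left hd
    have hd2 := X_pow_dvd_iff.1 (Dvd.dvd.mul_left hdY (∏ k ∈ B, (1 + C (f k) * (X - 1))))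
    apply h0i'
    rw [lam_apply]
    exact Finset.sum_eq_zero fun k hk => hd2 k (Finset.mem_range.1 hk)
  have hlin : ∀ k, (1 + C (f k) * (X - 1) : ℝ[X]) = C (f k) * X + C (1 - f k) := by
    intro k; simp; ring
  have hsplit : Q.Splits := by
    apply Splits.mul
    · apply Splits.pow
      have := Splits.X_sub_C (1 : ℝ)
      simpa using this
    · apply Splits.prod
      intro k _
      rw [hlin]
      exact Splits.of_natDegree_le_one (natDegree_linear_le)
  have hdeg : Q.natDegree = K - 3 := by
    have hY0 : Y ≠ 0 := by
      rw [hY, Finset.prod_ne_zero_iff]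
      intro k _ h
      rw [hlin] at h
      have := natDegree_linear (a := f k) (b := 1 - f k) (hf k)
      rw [h] at this; simp at this
    have hX : (X - 1 : ℝ[X]) ≠ 0 := by simpa using X_sub_C_ne_zero (1 : ℝ)
    rw [hQ, natDegree_mul (pow_ne_zero _ hX) hY0, natDegree_pow, hY, natDegree_prod]
    · rw [Finset.sum_congr rfl (g := fun _ => 1)]
      · have hc : #S = K - #B - 1 := by
          rw [hS, Finset.card_erase_of_mem hiS, Finset.card_sdiff_of_subset (Finset.subset_univ _)]; simp
        have e : (X - 1 : ℝ[X]).natDegree = 1 := by simpa using natDegree_X_sub_C (1 : ℝ)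
        have hp : 0 < #(univ \ B) := Finset.card_pos.2 ⟨i, hiS⟩
        rw [Finset.card_sdiff_of_subset (Finset.subset_univ _)] at hp
        simp at hp
        simp only [Finset.sum_const, hc, e, smul_eq_mul]
        omega
      · intro k _; rw [hlin]; exact natDegree_linear (hf k)
    · intro k hk; exact Finset.prod_ne_zero_iff.1 hY0 k hk
  have hKB : #B + 1 ≤ K := by
    have := Finset.card_lt_univ_of_notMem hi
    simpa using this
  obtain ⟨l, hl, hl'⟩ := hexl
  rcases Nat.eq_zero_or_pos g with rfl | hg
  · exact hl' (by rw [Nat.le_zero.1 hl]; exact q1)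
  obtain ⟨k, rfl⟩ : ∃ k, g = k + 1 := ⟨g - 1, by omega⟩
  rw [sub_mul, coeff_sub, one_mul, q1, sub_zero, coeff_X_mul] at q2
  have hl2 : l ≤ k := by
    rcases Nat.lt_or_ge k l with h | h
    · exact absurd (by rw [show l = k + 1 by omega]; exact q1) hl'
    · exact h
  have := rr_gap Q hsplit k q2 q1 ⟨l, hl2, hl'⟩
  omega

noncomputable def GCorr {K L : ℕ} [NeZero L] (g : Fin K → ZMod L → ℝ) (B : Finset (Fin K))
    (τ : Fin K → ZMod L) : ℝ := ∑ t : ZMod L, ∏ j ∈ B, g j (t + τ j)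

lemma GCorr_orth {K L : ℕ} [NeZero L] (g : Fin K → ZMod L → ℝ) (hg : ∀ j, ∑ t, g j t = 0)
    (A B : Finset (Fin K)) (hAB : A ≠ B) : ∑ τ, GCorr g A τ * GCorr g B τ = 0 := by
  classical
  obtain ⟨j, hj⟩ : ∃ j, ¬ (j ∈ A ↔ j ∈ B) := by
    by_contra! h
    exact hAB (Finset.ext h)
  have hsh : ∀ t, ∑ x, g j (t + x) = 0 := fun t => by
    rw [← hg j]; exact Fintype.sum_equiv (Equiv.addLeft t) _ _ fun x => rfl
  simp only [GCorr, Finset.sum_mul_sum]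
  rw [Finset.sum_comm]
  refine Finset.sum_eq_zero fun t _ => ?_
  rw [Finset.sum_comm]
  refine Finset.sum_eq_zero fun u _ => ?_
  have e : ∀ τ : Fin K → ZMod L, (∏ j ∈ A, g j (t + τ j)) * ∏ j ∈ B, g j (u + τ j)
      = ∏ j, (fun j x => (if j ∈ A then g j (t + x) else 1) * (if j ∈ B then g j (u + x) else 1))
        j (τ j) := by
    intro τ
    rw [Finset.prod_mul_distrib]
    simp [Finset.prod_ite_mem]
  rw [Finset.sum_congr rfl fun τ _ => e τ]
  refine (Fintype.prod_sum (κ := fun _ => ZMod L) (fun j x =>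
    (if j ∈ A then g j (t + x) else 1) * (if j ∈ B then g j (u + x) else 1))).symm.trans ?_
  refine Finset.prod_eq_zero (Finset.mem_univ j) ?_
  by_cases hA : j ∈ A <;> by_cases hB : j ∈ B <;> simp_all

lemma expand {K L : ℕ} [NeZero L] (c : Finset (Fin K) → ℝ) (g : Fin K → ZMod L → ℝ)
    (hg : ∀ j, ∑ t, g j t = 0) (G : (Fin K → ZMod L) → ℝ) (hG : ∀ τ, G τ = ∑ B, c B * GCorr g B τ)
    (hconst : ∀ τ τ', G τ = G τ') (B : Finset (Fin K)) (hB : B.Nonempty) (hc : c B ≠ 0)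
    (τ : Fin K → ZMod L) : GCorr g B τ = 0 := by
  classical
  have h0 : ∑ τ, GCorr g B τ = 0 := by
    have := GCorr_orth g hg ∅ B hB.ne_empty.symm
    simp only [GCorr, Finset.prod_empty, Finset.sum_const, ← Finset.mul_sum] at this
    have hL : (L : ℝ) ≠ 0 := by exact_mod_cast NeZero.ne L
    simpa [GCorr, hL, Finset.card_univ, ZMod.card] using this
  have h1 : ∑ τ, G τ * GCorr g B τ = 0 := by
    simp only [fun τ' => hconst τ' τ]
    rw [← Finset.mul_sum, h0, mul_zero]
  have h2 : ∑ τ, G τ * GCorr g B τ = c B * ∑ τ, GCorr g B τ * GCorr g B τ := by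
    simp only [hG, Finset.sum_mul]
    rw [Finset.sum_comm, Finset.sum_eq_single B]
    · simp only [mul_assoc, Finset.mul_sum]
    · intro A _ hA
      simp only [mul_assoc]
      rw [← Finset.mul_sum, GCorr_orth g hg A B hA, mul_zero]
    · simp
  rw [h1] at h2
  have h3 := (mul_eq_zero.1 h2.symm).resolve_left hc
  rw [Finset.sum_eq_zero_iff_of_nonneg (fun _ _ => mul_self_nonneg _)] at h3
  exact mul_self_eq_zero.1 (h3 τ (Finset.mem_univ _))

lemma expand0 {K L : ℕ} [NeZero L] (c : Finset (Fin K) → ℝ) (g : Fin K → ZMod L → ℝ)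
    (hg : ∀ j, ∑ t, g j t = 0) (G : (Fin K → ZMod L) → ℝ) (hG : ∀ τ, G τ = ∑ B, c B * GCorr g B τ)
    (hpos : ∀ τ, 0 < G τ) : c ∅ ≠ 0 := by
  classical
  intro hc
  have hE : ∀ τ, GCorr g ∅ τ = L := by simp [GCorr, ZMod.card]
  have h2 : ∑ τ, G τ * GCorr g ∅ τ = 0 := by
    simp only [hG, Finset.sum_mul]
    rw [Finset.sum_comm]
    refine Finset.sum_eq_zero fun A _ => ?_
    simp only [mul_assoc]
    rw [← Finset.mul_sum]
    by_cases hA : A = ∅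
    · rw [hA, hc, zero_mul]
    · rw [GCorr_orth g hg A ∅ hA, mul_zero]
  have hL : (0 : ℝ) < L := by exact_mod_cast NeZero.pos L
  have : 0 < ∑ τ, G τ * GCorr g ∅ τ :=
    Finset.sum_pos (fun τ _ => by rw [hE]; exact mul_pos (hpos τ) hL) Finset.univ_nonempty
  linarith

open Polynomial in
lemma slot {K : ℕ} (γ : ℕ) (hγ : 1 ≤ γ) (b : Fin K → ℕ) (hb : ∀ j, b j = 0 ∨ b j = 1) (i : Fin K) :
    lam γ (∏ j, uu (fun j => (b j : ℝ)) i j) =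
      if b i = 1 ∧ ∑ j ∈ univ.erase i, b j ≤ γ - 1 then 1 else 0 := by
  have h : ∏ j, uu (fun j => (b j : ℝ)) i j = C (b i : ℝ) * X ^ (∑ j ∈ univ.erase i, b j) := by
    rw [← Finset.mul_prod_erase _ _ (Finset.mem_univ i), ← Finset.prod_pow_eq_pow_sum]
    congr 1
    · simp [uu]
    · refine Finset.prod_congr rfl fun k hk => ?_
      rcases hb k with h | h <;> simp [uu, Finset.ne_of_mem_erase hk, h]
  rw [h, lam_C_mul, lam_apply]
  simp only [coeff_X_pow, Finset.sum_ite_eq', Finset.mem_range]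
  rcases hb i with h | h
  · simp [h]
  · simp only [h, Nat.cast_one, one_mul, true_and]
    congr 1
    simp; omega

open Polynomial in
lemma Rcount_expand {K L γ : ℕ} [NeZero L] (hγ : 1 ≤ γ) (s : Fin K → ZMod L → ℕ)
    (hbin : ∀ i t, s i t = 0 ∨ s i t = 1) (f : Fin K → ℝ) (i : Fin K) (τ : Fin K → ZMod L) :
    (Rcount s γ i τ : ℝ) = ∑ B, cB f γ i B * GCorr (fun j t => (s j t : ℝ) - f j) B τ := by
  classical
  have h1 : (Rcount s γ i τ : ℝ) =
      ∑ t, lam γ (∏ j, uu (fun j => (s j (t + τ j) : ℝ)) i j) := by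
    rw [Rcount, Finset.card_filter]
    push_cast
    refine Finset.sum_congr rfl fun t _ => ?_
    rw [slot γ hγ (fun j => s j (t + τ j)) (fun j => hbin j _) i]
  rw [h1]
  have h2 : ∀ t : ZMod L, lam γ (∏ j, uu (fun j => (s j (t + τ j) : ℝ)) i j) =
      ∑ B, cB f γ i B * ∏ j ∈ B, ((s j (t + τ j) : ℝ) - f j) := by
    intro t
    have e : ∀ j, uu (fun j => (s j (t + τ j) : ℝ)) i j =
        C ((s j (t + τ j) : ℝ) - f j) * vv i j + uu f i j := by
      intro j
      by_cases hj : j = i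
      · subst hj; simp [uu, vv]
      · simp [uu, vv, hj]; ring
    simp only [e]
    rw [Finset.prod_add, map_sum, Finset.powerset_univ]
    refine Finset.sum_congr rfl fun B _ => ?_
    rw [Finset.prod_mul_distrib, ← map_prod, mul_assoc, lam_C_mul, mul_comm, cB]
  simp only [h2, GCorr, Finset.mul_sum]
  rw [Finset.sum_comm]

lemma final_dvd {K L : ℕ} (n d : Fin K → ℕ) (hcop : ∀ i, Nat.Coprime (n i) (d i))
    (h : ∀ B : Finset (Fin K), (∏ j ∈ B, d j) ∣ L * ∏ j ∈ B, n j) : (∏ i, d i) ∣ L := by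
  classical
  rw [Nat.dvd_iff_prime_pow_dvd_dvd]
  intro p k hp hk
  set B := univ.filter (fun j => p ∣ d j) with hB
  rw [← Finset.prod_sdiff (Finset.subset_univ B)] at hk
  have c1 : Nat.Coprime (p ^ k) (∏ j ∈ univ \ B, d j) := by
    apply Nat.Coprime.pow_left
    apply Nat.Coprime.prod_right
    intro j hj
    rw [hp.coprime_iff_not_dvd]
    simpa [hB] using hj
  have c2 : Nat.Coprime (p ^ k) (∏ j ∈ B, n j) := by
    apply Nat.Coprime.pow_left
    apply Nat.Coprime.prod_right
    intro j hj
    have : p ∣ d j := by simpa [hB] using hj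
    exact ((hcop j).coprime_dvd_right this).symm
  exact c2.dvd_of_dvd_mul_right ((c1.dvd_of_dvd_mul_left hk).trans (h B))

theorem stmt4 (K L γ : ℕ) (hK : 2 ≤ K) (hL : 1 ≤ L) [NeZero L]
    (s : Fin K → ZMod L → ℕ) (hbin : ∀ i t, s i t = 0 ∨ s i t = 1)
    (hγ1 : 1 ≤ γ) (hγK : γ < K) (hTI : IsTI s γ)
    (hR : ∀ (i : Fin K) (τ : Fin K → ZMod L), 0 < R s γ i τ)
    (n d : Fin K → ℕ) (hn : ∀ i, 0 < n i) (hd : ∀ i, 0 < d i)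
    (hcop : ∀ i, Nat.Coprime (n i) (d i))
    (hduty : ∀ i, duty (s i) = (n i : ℚ) / (d i)) :
    (∏ i, d i) ∣ L := by
  classical
  have hLR : (L : ℝ) ≠ 0 := by exact_mod_cast NeZero.ne L
  have hLQ : (L : ℚ) ≠ 0 := by exact_mod_cast NeZero.ne L
  have hLQ' : (0 : ℚ) < L := by exact_mod_cast NeZero.pos L
  set f : Fin K → ℝ := fun j => (n j : ℝ) / d j with hf
  have hdR : ∀ j, (d j : ℝ) ≠ 0 := fun j => by exact_mod_cast (hd j).ne'
  have hnR : ∀ j, (n j : ℝ) ≠ 0 := fun j => by exact_mod_cast (hn j).ne'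
  have hf0 : ∀ j, f j ≠ 0 := fun j => div_ne_zero (hnR j) (hdR j)
  have hsum : ∀ j, ∑ t, (s j t : ℝ) = L * f j := by
    intro j
    have h := hduty j
    rw [duty, div_eq_iff hLQ] at h
    have h' : ((∑ t, (s j t : ℚ) : ℚ) : ℝ) = (((n j : ℚ) / d j * L : ℚ) : ℝ) := by rw [h]
    push_cast at h'
    rw [h', hf]; ring
  set g : Fin K → ZMod L → ℝ := fun j t => (s j t : ℝ) - f j with hg
  have hg0 : ∀ j, ∑ t, g j t = 0 := by
    intro j
    simp only [hg, Finset.sum_sub_distrib, hsum]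
    simp [ZMod.card]
  have hexp := fun i τ => Rcount_expand hγ1 s hbin f i τ
  have hpos : ∀ i τ, (0 : ℝ) < Rcount s γ i τ := by
    intro i τ
    have h := hR i τ
    rw [R, div_pos_iff_of_pos_right hLQ'] at h
    exact_mod_cast h
  have hconst : ∀ i τ τ', (Rcount s γ i τ : ℝ) = Rcount s γ i τ' := by
    intro i τ τ'
    have h := hTI i τ τ'
    rw [R, R, div_left_inj' hLQ] at h
    exact_mod_cast h
  have h0 : ∀ i, cB f γ i ∅ ≠ 0 := fun i =>
    expand0 (cB f γ i) g hg0 (fun τ => (Rcount s γ i τ : ℝ)) (hexp i) (hpos i)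
  have hCC : ∀ B : Finset (Fin K), B.Nonempty → ∀ τ, GCorr g B τ = 0 := by
    intro B hB τ
    obtain ⟨i, hi⟩ := cB_ne f γ hK hγ1 hγK hf0 h0 B hB
    exact expand (cB f γ i) g hg0 (fun τ => (Rcount s γ i τ : ℝ)) (hexp i) (hconst i) B hB hi τ
  apply final_dvd n d hcop
  intro B
  have hM : ((∑ t, ∏ j ∈ B, s j t : ℕ) : ℝ) = L * ∏ j ∈ B, f j := by
    push_cast
    have e : ∀ t, ∏ j ∈ B, (s j t : ℝ) =
        ∑ A ∈ B.powerset, (∏ j ∈ A, g j (t + (0 : Fin K → ZMod L) j)) * ∏ j ∈ B \ A, f j := by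
      intro t
      rw [← Finset.prod_add]
      simp [hg]
    simp only [e]
    rw [Finset.sum_comm, Finset.sum_eq_single ∅]
    · simp [ZMod.card]
    · intro A _ hA
      rw [← Finset.sum_mul]
      have := hCC A (Finset.nonempty_iff_ne_empty.2 hA) 0
      rw [GCorr] at this
      rw [this, zero_mul]
    · simp
  refine ⟨∑ t, ∏ j ∈ B, s j t, ?_⟩
  have hD : (∏ j ∈ B, (d j : ℝ)) ≠ 0 := Finset.prod_ne_zero_iff.2 fun j _ => hdR j
  have : ((L * ∏ j ∈ B, n j : ℕ) : ℝ) = (((∏ j ∈ B, d j) * ∑ t, ∏ j ∈ B, s j t : ℕ) : ℝ) := by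
    rw [Nat.cast_mul, Nat.cast_mul, hM, hf, Finset.prod_div_distrib]
    push_cast
    field_simp
  exact_mod_cast this
end

section
/- A protocol sequence set s_1, …, s_K is SI if and only if for every choice of bits (b_1,…,b_K) ∈ {0,1}^K the quantity N(b_1,…,b_K | τ_1,…,τ_K) is a constant function of the shifts (τ_1,…,τ_K) ∈ (ZMod L)^K. -/
open Finset

/-- `Ncount s b τ` is the number of `t ∈ ZMod L` with `s j (t + τ j) = b j` for all `j`. -/
def Ncount {K L : ℕ} [NeZero L] (s : Fin K → ZMod L → ℕ)
    (b : Fin K → ℕ) (τ : Fin K → ZMod L) : ℕ :=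
  (Finset.univ.filter (fun t : ZMod L => ∀ j, s j (t + τ j) = b j)).card

theorem Hcorr_eq_sum {K L : ℕ} [NeZero L] (s : Fin K → ZMod L → ℕ)
    (hbin : ∀ i t, s i t = 0 ∨ s i t = 1) (A : Finset (Fin K)) (τ : Fin K → ZMod L) :
    Hcorr s A τ = ∑ b ∈ Fintype.piFinset (fun _ : Fin K => ({0, 1} : Finset ℕ)),
      (∏ j ∈ A, b j) * Ncount s b τ := by
  unfold Hcorr Ncount
  simp_rw [Finset.card_filter, Finset.mul_sum]
  rw [Finset.sum_comm]
  refine Finset.sum_congr rfl fun t _ => ?_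
  rw [Finset.sum_eq_single (fun j => s j (t + τ j))]
  · simp
  · intro b _ hb
    rw [if_neg, mul_zero]
    intro h
    exact hb (funext fun j => (h j).symm)
  · intro h
    exfalso
    apply h
    rw [Fintype.mem_piFinset]
    intro j
    simpa using hbin j (t + τ j)

theorem Ncount_eq_sum {K L : ℕ} [NeZero L] (s : Fin K → ZMod L → ℕ)
    (hbin : ∀ i t, s i t = 0 ∨ s i t = 1) (b : Fin K → ℕ) (hb : ∀ i, b i = 0 ∨ b i = 1)
    (τ : Fin K → ZMod L) :
    (Ncount s b τ : ℤ) = ∑ A ∈ (Finset.univ : Finset (Fin K)).powerset,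
      ((∏ j ∈ A, (2 * (b j : ℤ) - 1)) * ∏ j ∈ Finset.univ \ A, (1 - (b j : ℤ))) *
        (Hcorr s A τ : ℤ) := by
  have key : ∀ t : ZMod L, (if ∀ j, s j (t + τ j) = b j then (1 : ℤ) else 0) =
      ∏ j, ((2 * (b j : ℤ) - 1) * (s j (t + τ j) : ℤ) + (1 - (b j : ℤ))) := by
    intro t
    have h1 : ∀ j, ((2 * (b j : ℤ) - 1) * (s j (t + τ j) : ℤ) + (1 - (b j : ℤ))) =
        if s j (t + τ j) = b j then 1 else 0 := by
      intro j
      rcases hb j with h | h <;> rcases hbin j (t + τ j) with h' | h' <;> simp [h, h']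
    simp_rw [h1]
    rw [Finset.prod_ite_zero]
    simp
  unfold Ncount Hcorr
  rw [Finset.card_filter]
  push_cast
  simp_rw [key, Finset.prod_add, Finset.mul_sum]
  rw [Finset.sum_comm]
  refine Finset.sum_congr rfl fun A _ => Finset.sum_congr rfl fun t _ => ?_
  rw [Finset.prod_mul_distrib]
  ring

theorem stmt5 (K L : ℕ) (hK : 1 ≤ K) (hL : 1 ≤ L) [NeZero L]
    (s : Fin K → ZMod L → ℕ) (hbin : ∀ i t, s i t = 0 ∨ s i t = 1) :
    IsSI s ↔
      ∀ b : Fin K → ℕ, (∀ i, b i = 0 ∨ b i = 1) →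
        ∀ τ τ' : Fin K → ZMod L, Ncount s b τ = Ncount s b τ' := by
  constructor
  · intro h b hb τ τ'
    have : (Ncount s b τ : ℤ) = Ncount s b τ' := by
      rw [Ncount_eq_sum s hbin b hb, Ncount_eq_sum s hbin b hb]
      refine Finset.sum_congr rfl fun A _ => ?_
      rcases A.eq_empty_or_nonempty with rfl | hA
      · simp [Hcorr]
      · rw [h A hA τ τ']
    exact_mod_cast this
  · intro h A _ τ τ'
    rw [Hcorr_eq_sum s hbin, Hcorr_eq_sum s hbin]
    refine Finset.sum_congr rfl fun b hb => ?_
    rw [h b _ τ τ']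
    intro i
    simpa using Fintype.mem_piFinset.1 hb i
end

section
/- If a protocol sequence set s_1, …, s_K is SI, then for every MPR capability γ with 1 ≤ γ < K the set is TI with MPR capability γ, i.e., for every user i the throughput R_i(τ_1,…,τ_K) is a constant function of the shifts (τ_1,…,τ_K). -/
open Finset

/-- Mixed correlations (active on `A`, idle on `B`) are shift-independent. -/
theorem mixed_const {K L : ℕ} [NeZero L] (s : Fin K → ZMod L → ℕ) (hSI : IsSI s)
    (τ τ' : Fin K → ZMod L) (B : Finset (Fin K)) :
    ∀ A : Finset (Fin K), Disjoint A B →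
      ∑ t : ZMod L, (∏ j ∈ A, (s j (t + τ j) : ℤ)) * ∏ j ∈ B, (1 - (s j (t + τ j) : ℤ)) =
      ∑ t : ZMod L, (∏ j ∈ A, (s j (t + τ' j) : ℤ)) * ∏ j ∈ B, (1 - (s j (t + τ' j) : ℤ)) := by
  induction B using Finset.induction_on with
  | empty =>
    intro A _
    rcases A.eq_empty_or_nonempty with rfl | hA
    · simp
    · have h := hSI A hA τ τ'
      unfold Hcorr at h
      simp only [Finset.prod_empty, mul_one]
      exact_mod_cast h
  | insert b B hb ih =>
    intro A hAB
    rw [Finset.disjoint_insert_right] at hAB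
    have key : ∀ σ : Fin K → ZMod L,
        ∑ t : ZMod L, (∏ j ∈ A, (s j (t + σ j) : ℤ)) *
            ∏ j ∈ insert b B, (1 - (s j (t + σ j) : ℤ)) =
        ∑ t : ZMod L, (∏ j ∈ A, (s j (t + σ j) : ℤ)) * ∏ j ∈ B, (1 - (s j (t + σ j) : ℤ)) -
        ∑ t : ZMod L, (∏ j ∈ insert b A, (s j (t + σ j) : ℤ)) *
            ∏ j ∈ B, (1 - (s j (t + σ j) : ℤ)) := by
      intro σ
      rw [← Finset.sum_sub_distrib]
      refine Finset.sum_congr rfl fun t _ => ?_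
      rw [Finset.prod_insert hb, Finset.prod_insert hAB.1]
      ring
    rw [key, key, ih A hAB.2, ih (insert b A) (Finset.disjoint_insert_left.2 ⟨hb, hAB.2⟩)]

/-- The product detecting the active set. -/
theorem pattern_prod {K : ℕ} (x : Fin K → ℕ) (hx : ∀ j, x j = 0 ∨ x j = 1)
    (S : Finset (Fin K)) :
    (∏ j ∈ S, (x j : ℤ)) * ∏ j ∈ Sᶜ, (1 - (x j : ℤ)) =
      if S = Finset.univ.filter (fun j => x j = 1) then 1 else 0 := by
  split_ifs with h
  · have h1 : ∏ j ∈ S, (x j : ℤ) = 1 := by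
      refine Finset.prod_eq_one fun j hj => ?_
      rw [h, Finset.mem_filter] at hj
      simp [hj.2]
    have h2 : ∏ j ∈ Sᶜ, (1 - (x j : ℤ)) = 1 := by
      refine Finset.prod_eq_one fun j hj => ?_
      rw [h, Finset.mem_compl, Finset.mem_filter] at hj
      rcases hx j with h0 | h0
      · simp [h0]
      · simp [h0] at hj
    rw [h1, h2, mul_one]
  · by_contra hne
    apply h
    have h1 := left_ne_zero_of_mul hne
    have h2 := right_ne_zero_of_mul hne
    rw [Finset.prod_ne_zero_iff] at h1 h2
    ext j
    rw [Finset.mem_filter]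
    constructor
    · intro hj
      refine ⟨Finset.mem_univ _, (hx j).resolve_left fun h0 => h1 j hj (by simp [h0])⟩
    · rintro ⟨_, h0⟩
      by_contra hj
      exact h2 j (Finset.mem_compl.2 hj) (by simp [h0])

theorem Rcount_eq {K L : ℕ} [NeZero L] (s : Fin K → ZMod L → ℕ)
    (hbin : ∀ i t, s i t = 0 ∨ s i t = 1) (γ : ℕ) (i : Fin K) (τ : Fin K → ZMod L) :
    (Rcount s γ i τ : ℤ) = ∑ S : Finset (Fin K),
      (if i ∈ S ∧ (S.erase i).card ≤ γ - 1 then 1 else 0) *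
      ∑ t : ZMod L, (∏ j ∈ S, (s j (t + τ j) : ℤ)) * ∏ j ∈ Sᶜ, (1 - (s j (t + τ j) : ℤ)) := by
  simp_rw [Finset.mul_sum]
  rw [Finset.sum_comm]
  unfold Rcount
  rw [Finset.card_filter]
  push_cast
  refine Finset.sum_congr rfl fun t _ => ?_
  simp_rw [pattern_prod (fun j => s j (t + τ j)) (fun j => hbin j _)]
  simp only [mul_ite, mul_one, mul_zero, Finset.sum_ite_eq', Finset.mem_univ, if_true]
  have hc : ((Finset.univ.filter (fun j => s j (t + τ j) = 1)).erase i).card =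
      ∑ j ∈ Finset.univ.erase i, s j (t + τ j) := by
    rw [← Finset.filter_erase, Finset.card_filter]
    refine Finset.sum_congr rfl fun j _ => ?_
    rcases hbin j (t + τ j) with h | h <;> simp [h]
  rw [hc]
  simp

theorem stmt6 (K L : ℕ) (hK : 2 ≤ K) (hL : 1 ≤ L) [NeZero L]
    (s : Fin K → ZMod L → ℕ) (hbin : ∀ i t, s i t = 0 ∨ s i t = 1)
    (hSI : IsSI s) :
    ∀ γ : ℕ, 1 ≤ γ → γ < K →
      ∀ (i : Fin K) (τ τ' : Fin K → ZMod L), R s γ i τ = R s γ i τ' := by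
  intro γ _ _ i τ τ'
  have h : (Rcount s γ i τ : ℤ) = Rcount s γ i τ' := by
    rw [Rcount_eq s hbin, Rcount_eq s hbin]
    refine Finset.sum_congr rfl fun S _ => ?_
    rw [mixed_const s hSI τ τ' Sᶜ S disjoint_compl_right]
  have h' : Rcount s γ i τ = Rcount s γ i τ' := by exact_mod_cast h
  unfold R
  rw [h']
end

section
/- For any K ≥ 1 and positive integers n_1,…,n_K and d_1,…,d_K with n_i ≤ d_i for every i, there exists a protocol sequence set s_1, …, s_K of common period L = d_1 · d_2 ⋯ d_K such that the set is SI and, for every i, the duty factor of s_i equals n_i/d_i. -/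
open Finset

/-- Generalized Hamming cross-correlation of the sequences indexed by `A`. -/
def Hcorr' (K L : ℕ) (hL : L ≠ 0) (s : Fin K → ZMod L → ℕ)
    (A : Finset (Fin K)) (τ : Fin K → ZMod L) : ℕ :=
  haveI : NeZero L := ⟨hL⟩
  ∑ t : ZMod L, ∏ j ∈ A, s j (t + τ j)

/-- The family `s` is shift-invariant (SI). -/
def IsSI' (K L : ℕ) (hL : L ≠ 0) (s : Fin K → ZMod L → ℕ) : Prop :=
  ∀ A : Finset (Fin K), A.Nonempty →
    ∀ τ τ' : Fin K → ZMod L, Hcorr' K L hL s A τ = Hcorr' K L hL s A τ'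

/-- Duty factor of a single sequence. -/
def duty' (L : ℕ) (hL : L ≠ 0) (s : ZMod L → ℕ) : ℚ :=
  haveI : NeZero L := ⟨hL⟩
  (∑ t : ZMod L, (s t : ℚ)) / L

def Dp {K : ℕ} (d : Fin K → ℕ) (i : Fin K) : ℕ := ∏ j ∈ Finset.Iio i, d j

def seqS {K : ℕ} (n d : Fin K → ℕ) (L : ℕ) (i : Fin K) (t : ZMod L) : ℕ :=
  if t.val / Dp d i % d i < n i then 1 else 0

lemma Dp_mul {K : ℕ} (d : Fin K → ℕ) (i : Fin K) :
    Dp d i * d i = ∏ j ∈ Finset.Iic i, d j := by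
  unfold Dp
  rw [← Finset.Iio_insert, Finset.prod_insert (by simp), mul_comm]

lemma Dp_mul_dvd {K : ℕ} (d : Fin K → ℕ) (i : Fin K) : Dp d i * d i ∣ ∏ j, d j := by
  rw [Dp_mul]
  exact Finset.prod_dvd_prod_of_subset _ _ _ (Finset.subset_univ _)

lemma Dp_mul_dvd_Dp {K : ℕ} (d : Fin K → ℕ) {i j : Fin K} (h : j < i) :
    Dp d j * d j ∣ Dp d i := by
  rw [Dp_mul]
  apply Finset.prod_dvd_prod_of_subset
  intro x hx
  simp only [Finset.mem_Iic, Finset.mem_Iio] at *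
  exact lt_of_le_of_lt hx h

lemma seqS_cast {K : ℕ} (n d : Fin K → ℕ) (i : Fin K) (x : ℕ) :
    seqS n d (∏ j, d j) i (x : ZMod (∏ j, d j)) =
      if x / Dp d i % d i < n i then 1 else 0 := by
  unfold seqS
  rw [ZMod.val_natCast, ← Nat.mod_mul_right_div_self, Nat.mod_mod_of_dvd _ (Dp_mul_dvd d i),
    Nat.mod_mul_right_div_self]

lemma seqS_period {K : ℕ} (n d : Fin K → ℕ) [NeZero (∏ j, d j)] {i j : Fin K} (h : j < i)
    (t : ZMod (∏ j, d j)) :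
    seqS n d (∏ j, d j) j (t + (Dp d i : ℕ)) = seqS n d (∏ j, d j) j t := by
  obtain ⟨x, rfl⟩ : ∃ x : ℕ, (x : ZMod (∏ j, d j)) = t := ⟨t.val, ZMod.natCast_zmod_val t⟩
  rw [← Nat.cast_add, seqS_cast, seqS_cast]
  obtain ⟨q, hq⟩ := Dp_mul_dvd_Dp d h
  rw [← Nat.mod_mul_right_div_self (x + _), hq, Nat.add_mul_mod_self_left,
    Nat.mod_mul_right_div_self]

lemma window (n d a : ℕ) (h : n ≤ d) :
    ∑ k ∈ Finset.range d, (if (a + k) % d < n then 1 else 0) = n := by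
  have h1 := Nat.filter_Ico_card_eq_of_periodic a d (fun x => x % d < n)
    (by intro x; simp)
  have h2 := Nat.filter_Ico_card_eq_of_periodic 0 d (fun x => x % d < n)
    (by intro x; simp)
  have h3 : #{x ∈ Finset.Ico 0 (0 + d) | x % d < n} = n := by
    have : {x ∈ Finset.Ico 0 (0 + d) | x % d < n} = Finset.range n := by
      ext x
      simp only [Finset.mem_filter, Finset.mem_Ico, Finset.mem_range]
      constructor
      · rintro ⟨h4, h5⟩
        rwa [Nat.mod_eq_of_lt (by omega)] at h5
      · intro h4
        rw [Nat.mod_eq_of_lt (by omega)]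
        omega
    rw [this, Finset.card_range]
  rw [h2] at h3
  rw [h3, Finset.card_filter, Finset.sum_Ico_eq_sum_range] at h1
  simpa using h1

lemma seqS_window {K : ℕ} (n d : Fin K → ℕ) [NeZero (∏ j, d j)] (hd : ∀ i, 0 < d i)
    (hnd : ∀ i, n i ≤ d i) (i : Fin K) (t : ZMod (∏ j, d j)) :
    ∑ k ∈ Finset.range (d i), seqS n d (∏ j, d j) i (t + k • ((Dp d i : ℕ) : ZMod (∏ j, d j)))
      = n i := by
  obtain ⟨x, rfl⟩ : ∃ x : ℕ, (x : ZMod (∏ j, d j)) = t := ⟨t.val, ZMod.natCast_zmod_val t⟩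
  have hD : 0 < Dp d i := Finset.prod_pos fun j _ => hd j
  rw [← window (n i) (d i) (x / Dp d i) (hnd i)]
  refine Finset.sum_congr rfl fun k _ => ?_
  rw [nsmul_eq_mul, ← Nat.cast_mul, ← Nat.cast_add, seqS_cast, Nat.add_mul_div_right _ _ hD]

lemma avg {G : Type*} [AddCommGroup G] [Fintype G] (f g : G → ℕ) (c : G) (d n : ℕ)
    (hf : ∀ t, f (t + c) = f t) (hg : ∀ t, ∑ k ∈ Finset.range d, g (t + k • c) = n) :
    d * ∑ t, f t * g t = n * ∑ t, f t := by
  have hfk : ∀ (k : ℕ) t, f (t + k • c) = f t := by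
    intro k
    induction k with
    | zero => simp
    | succ k ih => intro t; rw [succ_nsmul, ← add_assoc, hf, ih]
  have h1 : ∀ k : ℕ, ∑ t, f t * g t = ∑ t, f t * g (t + k • c) := by
    intro k
    rw [← Equiv.sum_comp (Equiv.addRight (k • c)) (fun t => f t * g t)]
    simp [hfk]
  calc d * ∑ t, f t * g t = ∑ k ∈ Finset.range d, ∑ t, f t * g t := by simp
    _ = ∑ k ∈ Finset.range d, ∑ t, f t * g (t + k • c) := Finset.sum_congr rfl fun k _ => h1 k
    _ = n * ∑ t, f t := by
      rw [Finset.sum_comm]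
      simp_rw [← Finset.mul_sum, hg]
      rw [← Finset.sum_mul, mul_comm]

lemma main_count {K : ℕ} (n d : Fin K → ℕ) [NeZero (∏ j, d j)] (hd : ∀ i, 0 < d i)
    (hnd : ∀ i, n i ≤ d i) (τ : Fin K → ZMod (∏ j, d j)) (A : Finset (Fin K)) :
    (∏ j ∈ A, d j) * ∑ t, ∏ j ∈ A, seqS n d (∏ j, d j) j (t + τ j)
      = (∏ j ∈ A, n j) * ∏ j, d j := by
  induction A using Finset.induction_on_max with
  | empty => simp [ZMod.card]
  | insert a s ha ih =>
    have hna : a ∉ s := fun h => lt_irrefl _ (ha a h)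
    rw [Finset.prod_insert hna, Finset.prod_insert hna]
    have := avg (fun t => ∏ j ∈ s, seqS n d (∏ j, d j) j (t + τ j))
      (fun t => seqS n d (∏ j, d j) a (t + τ a)) ((Dp d a : ℕ) : ZMod (∏ j, d j)) (d a) (n a)
      (by
        intro t
        refine Finset.prod_congr rfl fun j hj => ?_
        rw [add_right_comm, seqS_period n d (ha j hj)])
      (by
        intro t
        simp_rw [add_right_comm t _ (τ a)]
        exact seqS_window n d hd hnd a _)
    simp_rw [Finset.prod_insert hna]
    simp_rw [mul_comm (seqS n d _ a _)]
    rw [mul_comm (d a), mul_assoc, this, mul_left_comm, ih, mul_assoc]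

theorem stmt7 (K : ℕ) (hK : 1 ≤ K) (n d : Fin K → ℕ)
    (hn : ∀ i, 0 < n i) (hd : ∀ i, 0 < d i) (hnd : ∀ i, n i ≤ d i) :
    ∃ s : Fin K → ZMod (∏ i, d i) → ℕ,
      (∀ i t, s i t = 0 ∨ s i t = 1) ∧
      IsSI' K (∏ i, d i) (Finset.prod_ne_zero_iff.mpr fun i _ => (hd i).ne') s ∧
      ∀ i : Fin K,
        duty' (∏ i, d i) (Finset.prod_ne_zero_iff.mpr fun i _ => (hd i).ne') (s i)
          = (n i : ℚ) / (d i) := by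
  have hL : (∏ i, d i) ≠ 0 := Finset.prod_ne_zero_iff.mpr fun i _ => (hd i).ne'
  haveI : NeZero (∏ i, d i) := ⟨hL⟩
  refine ⟨seqS n d (∏ i, d i), ?_, ?_, ?_⟩
  · intro i t
    unfold seqS
    split_ifs <;> simp
  · intro A _ τ τ'
    have h1 := main_count n d hd hnd τ A
    have h2 := main_count n d hd hnd τ' A
    exact Nat.eq_of_mul_eq_mul_left (Finset.prod_pos fun j _ => hd j) (h1.trans h2.symm)
  · intro i
    have h1 := main_count n d hd hnd 0 {i}
    simp only [Finset.prod_singleton, Pi.zero_apply, add_zero] at h1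
    unfold duty'
    have hdi : (d i : ℚ) ≠ 0 := by exact_mod_cast (hd i).ne'
    have hLq : ((∏ i, d i : ℕ) : ℚ) ≠ 0 := by exact_mod_cast hL
    rw [div_eq_div_iff hLq hdi, mul_comm]
    exact_mod_cast h1
end

section
/- Let γ be a positive integer with 1 ≤ γ < K and let S = {s_1,…,s_K} be a protocol sequence set. If S is TI with MPR capability γ and for every subset T ⊆ {1,…,K} with |T| = K−1 the subfamily (s_j)_{j∈T} is SI (i.e., H((τ_j)_{j∈A}; A) is independent of the shifts for every nonempty A ⊆ T), then S itself is SI. -/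
open Finset

/-- Step function `n ↦ [n ≤ m]`. -/
def stepFn (m : ℕ) : ℕ → ℤ := fun n => if n ≤ m then 1 else 0

/-- Newton coefficients of the step function. -/
def stepCoeff (m a : ℕ) : ℤ := (fwdDiff 1)^[a] (stepFn m) 0

theorem stepFn_newton (m n : ℕ) :
    stepFn m n = ∑ k ∈ range (n + 1), n.choose k • stepCoeff m k := by
  have h := shift_eq_sum_fwdDiff_iter 1 (stepFn m) n 0
  simpa [stepCoeff] using h

theorem stepCoeff_ne_zero (m n : ℕ) (h : m ≤ n) : stepCoeff m (n + 1) ≠ 0 := by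
  have h1 := fwdDiff_iter_eq_sum_shift 1 (stepFn m) (n + 1) 0
  have h2 : stepCoeff m (n + 1)
      = (-1) ^ (n + 1) * ∑ k ∈ range (m + 1), ((-1) ^ k * ((n + 1).choose k : ℤ)) := by
    rw [stepCoeff, h1, mul_sum]
    have hs : range (m + 1) ⊆ range (n + 1 + 1) := by
      intro x; simp; omega
    rw [← sum_subset hs]
    · apply sum_congr rfl
      intro k hk
      have hk' : k ≤ m := by simp at hk; omega
      have : (-1 : ℤ) ^ (n + 1) = (-1) ^ (n + 1 - k) * (-1) ^ k := by
        rw [← pow_add]; congr 1; omega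
      rw [this]
      have h3 : (-1 : ℤ) ^ k * (-1) ^ k = 1 := by
        rw [← mul_pow]; simp
      simp only [stepFn, zero_add, smul_eq_mul, mul_one, hk', if_true]
      linear_combination (-(-1 : ℤ) ^ (n + 1 - k) * ((n + 1).choose k : ℤ)) * h3
    · intro k _ hk
      have hk' : ¬ k ≤ m := by simp at hk; omega
      simp [stepFn, hk']
  rw [h2, Int.alternating_sum_range_choose_eq_choose]
  have : (n.choose m : ℤ) ≠ 0 := by exact_mod_cast (Nat.choose_pos h).ne'
  exact mul_ne_zero (by simp) (mul_ne_zero (by simp) this)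

theorem pointwise {ι : Type*} [DecidableEq ι] (U : Finset ι) (x : ι → ℕ)
    (hx : ∀ j, x j = 0 ∨ x j = 1) (m : ℕ) :
    stepFn m (∑ j ∈ U, x j) =
      ∑ A ∈ U.powerset, stepCoeff m A.card * ((∏ j ∈ A, x j : ℕ) : ℤ) := by
  set S := U.filter (fun j => x j = 1) with hS
  have h1 : ∑ j ∈ U, x j = S.card := by
    rw [hS, card_filter]
    apply sum_congr rfl
    intro j _
    rcases hx j with h | h <;> simp [h]
  have hsub : S.powerset ⊆ U.powerset := powerset_mono.2 (filter_subset _ _)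
  rw [← sum_subset hsub, h1, stepFn_newton, ← sum_powerset_apply_card]
  · apply sum_congr rfl
    intro A hA
    have : ∏ j ∈ A, x j = 1 := by
      apply prod_eq_one
      intro j hj
      exact (mem_filter.1 (mem_powerset.1 hA hj)).2
    simp [this]
  · intro A hA hA'
    have : ∏ j ∈ A, x j = 0 := by
      by_contra hne
      apply hA'
      rw [mem_powerset] at hA ⊢
      intro j hj
      rw [hS, mem_filter]
      refine ⟨hA hj, (hx j).resolve_left ?_⟩
      exact prod_ne_zero_iff.1 hne j hj
    simp [this]

theorem Rcount_eq_s8 {K L : ℕ} [NeZero L] (s : Fin K → ZMod L → ℕ)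
    (hbin : ∀ i t, s i t = 0 ∨ s i t = 1) (γ : ℕ) (i : Fin K) (τ : Fin K → ZMod L) :
    (Rcount s γ i τ : ℤ) = ∑ A ∈ (univ.erase i).powerset,
      stepCoeff (γ - 1) A.card * (Hcorr s (insert i A) τ : ℤ) := by
  have hH : ∀ A ∈ (univ.erase i).powerset, stepCoeff (γ - 1) A.card * (Hcorr s (insert i A) τ : ℤ)
      = ∑ t : ZMod L, (s i (t + τ i) : ℤ) *
        (stepCoeff (γ - 1) A.card * ((∏ j ∈ A, s j (t + τ j) : ℕ) : ℤ)) := by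
    intro A hA
    have hi : i ∉ A := fun h => by simpa using mem_powerset.1 hA h
    rw [Hcorr, Nat.cast_sum, mul_sum]
    apply sum_congr rfl
    intro t _
    rw [prod_insert hi, Nat.cast_mul]
    ring
  rw [sum_congr rfl hH, sum_comm, Rcount, card_filter, Nat.cast_sum]
  apply sum_congr rfl
  intro t _
  rw [← mul_sum, ← pointwise _ (fun j => s j (t + τ j)) (fun j => hbin j _)]
  rcases hbin i (t + τ i) with h | h <;> simp [h, stepFn]

theorem stmt8 (K L γ : ℕ) (hK : 2 ≤ K) (hL : 1 ≤ L) [NeZero L]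
    (s : Fin K → ZMod L → ℕ) (hbin : ∀ i t, s i t = 0 ∨ s i t = 1)
    (hγ1 : 1 ≤ γ) (hγK : γ < K) (hTI : IsTI s γ)
    (hsub : ∀ T : Finset (Fin K), T.card = K - 1 →
      ∀ A ⊆ T, A.Nonempty →
        ∀ τ τ' : Fin K → ZMod L, Hcorr s A τ = Hcorr s A τ') :
    IsSI s := by
  have hproper : ∀ A : Finset (Fin K), A ≠ univ → A.Nonempty →
      ∀ τ τ' : Fin K → ZMod L, Hcorr s A τ = Hcorr s A τ' := by
    intro A hA hne
    obtain ⟨j, hj⟩ : ∃ j, j ∉ A := by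
      by_contra hcon
      push Not at hcon
      exact hA (eq_univ_iff_forall.2 hcon)
    refine hsub (univ.erase j) (by simp) A ?_ hne
    intro k hk
    simp only [mem_erase, mem_univ, and_true]
    rintro rfl
    exact hj hk
  intro A hne τ τ'
  by_cases hA : A = univ
  swap
  · exact hproper A hA hne τ τ'
  subst hA
  let i : Fin K := ⟨0, by omega⟩
  have hL0 : (L : ℚ) ≠ 0 := by exact_mod_cast NeZero.ne L
  have hR : (Rcount s γ i τ : ℤ) = Rcount s γ i τ' := by
    have h := hTI i τ τ'
    rw [R, R, div_left_inj' hL0] at h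
    exact_mod_cast h
  rw [Rcount_eq_s8 s hbin, Rcount_eq_s8 s hbin] at hR
  have hmem : univ.erase i ∈ (univ.erase i).powerset := mem_powerset_self _
  rw [← add_sum_erase _ _ hmem, ← add_sum_erase _ _ hmem] at hR
  have hrest : ∀ A ∈ ((univ.erase i).powerset).erase (univ.erase i),
      stepCoeff (γ - 1) A.card * (Hcorr s (insert i A) τ : ℤ)
        = stepCoeff (γ - 1) A.card * (Hcorr s (insert i A) τ' : ℤ) := by
    intro A hA
    rw [mem_erase, mem_powerset] at hA
    have hi : i ∉ A := fun h => by simpa using hA.2 h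
    rw [hproper (insert i A) ?_ (insert_nonempty _ _) τ τ']
    intro h
    apply hA.1
    rw [← h, erase_insert hi]
  rw [sum_congr rfl hrest, add_left_inj, insert_erase (mem_univ i)] at hR
  have hc : stepCoeff (γ - 1) (univ.erase i).card ≠ 0 := by
    have : (univ.erase i).card = (K - 2) + 1 := by simp; omega
    rw [this]
    exact stepCoeff_ne_zero _ _ (by omega)
  exact_mod_cast mul_left_cancel₀ hc hR
end

section
/- Let S = {s_1,…,s_K} be a protocol sequence set, let γ satisfy 1 ≤ γ < K, and let M satisfy 2 ≤ M < K. Set A = {1,…,M} and B = {M+1,…,K}. Suppose S is TI with MPR capability γ and every subfamily of S consisting of M−1 sequences is SI (i.e., for every T ⊆ {1,…,K} with |T| = M−1 and every nonempty A′ ⊆ T, H((τ_j)_{j∈A′}; A′) is independent of the shifts). Then for any two systems of shifts τ = (τ_1,…,τ_M), τ′ = (τ′_1,…,τ′_M) on A and any fixed shifts τ* = (τ*_{M+1},…,τ*_K) on B, δ_M(τ→τ′; A) · Σ_{i=1}^{M−1} (−1)^{M−i} · binom(M−2, i−1) · θ_{γ−i}(τ*; B) = 0, where θ_{γ−i}(τ*;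 B) is understood to be 0 whenever γ − i < 0 or γ − i > K − M. -/
open Finset

/-- `thetaZ s A m τ` counts the `t ∈ ZMod L` such that exactly `m` of the values
`s j (t + τ j)`, `j ∈ A`, equal `1` (zero when `m < 0` or `m > |A|`). -/
def thetaZ {K L : ℕ} [NeZero L] (s : Fin K → ZMod L → ℕ)
    (A : Finset (Fin K)) (m : ℤ) (τ : Fin K → ZMod L) : ℕ :=
  (Finset.univ.filter (fun t : ZMod L =>
    ((A.filter (fun j => s j (t + τ j) = 1)).card : ℤ) = m)).card


/-- active set -/
def actS {K L : ℕ} (s : Fin K → ZMod L → ℕ) (A : Finset (Fin K)) (τ : Fin K → ZMod L)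
    (t : ZMod L) : Finset (Fin K) := A.filter (fun j => s j (t + τ j) = 1)

lemma actS_subset {K L : ℕ} (s : Fin K → ZMod L → ℕ) (A : Finset (Fin K)) (τ : Fin K → ZMod L)
    (t : ZMod L) : actS s A τ t ⊆ A := Finset.filter_subset _ _

lemma indicator_eq {K L : ℕ} (s : Fin K → ZMod L → ℕ) (hbin : ∀ i t, s i t = 0 ∨ s i t = 1)
    (A S : Finset (Fin K)) (hS : S ⊆ A) (τ : Fin K → ZMod L) (t : ZMod L) :
    (if actS s A τ t = S then (1:ℤ) else 0) =
      ∑ U ∈ (A \ S).powerset, (-1) ^ U.card * ((∏ j ∈ S ∪ U, s j (t + τ j) : ℕ) : ℤ) := by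
  have h1 : (if actS s A τ t = S then (1:ℤ) else 0) =
      (∏ j ∈ S, (s j (t + τ j) : ℤ)) * ∏ j ∈ A \ S, (1 + -(s j (t + τ j) : ℤ)) := by
    split_ifs with h
    · subst h
      rw [Finset.prod_eq_one, Finset.prod_eq_one]
      · simp
      · intro j hj
        simp only [actS, mem_sdiff, mem_filter, not_and] at hj
        rcases hbin j (t + τ j) with h | h
        · simp [h]
        · exact absurd h (hj.2 hj.1)
      · intro j hj
        simp only [actS, mem_filter] at hj
        simp [hj.2]
    · symm
      by_contra hne
      apply h
      rw [mul_eq_zero, not_or, Finset.prod_eq_zero_iff, Finset.prod_eq_zero_iff] at hne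
      obtain ⟨ha, hb⟩ := hne
      push Not at ha hb
      ext j
      simp only [actS, mem_filter]
      constructor
      · rintro ⟨hjA, hj⟩
        by_contra hjS
        exact hb j (by simp [hjA, hjS]) (by simp [hj])
      · intro hj
        refine ⟨hS hj, ?_⟩
        rcases hbin j (t + τ j) with h | h
        · exact absurd (by simp [h]) (ha j hj)
        · exact h
  rw [h1, Finset.prod_one_add, Finset.mul_sum]
  refine Finset.sum_congr rfl fun U hU => ?_
  rw [Finset.mem_powerset] at hU
  have hd : Disjoint S U := Finset.disjoint_of_subset_right hU Finset.disjoint_sdiff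
  rw [Finset.prod_union hd, Finset.prod_neg]
  push_cast
  ring

/-- number of slots with active set `S` -/
def patN {K L : ℕ} [NeZero L] (s : Fin K → ZMod L → ℕ) (A : Finset (Fin K))
    (τ : Fin K → ZMod L) (S : Finset (Fin K)) : ℤ :=
  ∑ t : ZMod L, if actS s A τ t = S then (1:ℤ) else 0

lemma patN_eq {K L : ℕ} [NeZero L] (s : Fin K → ZMod L → ℕ)
    (hbin : ∀ i t, s i t = 0 ∨ s i t = 1)
    (A S : Finset (Fin K)) (hS : S ⊆ A) (τ : Fin K → ZMod L) :
    patN s A τ S = ∑ U ∈ (A \ S).powerset, (-1) ^ U.card * (Hcorr s (S ∪ U) τ : ℤ) := by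
  unfold patN Hcorr
  rw [Finset.sum_congr rfl fun t _ => indicator_eq s hbin A S hS τ t, Finset.sum_comm]
  refine Finset.sum_congr rfl fun U _ => ?_
  rw [← Finset.mul_sum]
  push_cast
  rfl

lemma patN_diff {K L : ℕ} [NeZero L] (s : Fin K → ZMod L → ℕ)
    (hbin : ∀ i t, s i t = 0 ∨ s i t = 1)
    (A S : Finset (Fin K)) (hS : S ⊆ A) (τ τ' : Fin K → ZMod L)
    (hinv : ∀ T, T ⊂ A → Hcorr s T τ = Hcorr s T τ') :
    patN s A τ' S - patN s A τ S =
      (-1) ^ (A \ S).card * ((Hcorr s A τ' : ℤ) - Hcorr s A τ) := by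
  rw [patN_eq s hbin A S hS, patN_eq s hbin A S hS, ← Finset.sum_sub_distrib,
    Finset.sum_eq_single (A \ S)]
  · rw [Finset.union_sdiff_of_subset hS]; ring
  · intro U hU hne
    rw [Finset.mem_powerset] at hU
    have : S ∪ U ⊂ A := by
      refine Finset.ssubset_iff_subset_ne.2
        ⟨Finset.union_subset hS (hU.trans Finset.sdiff_subset), fun h => hne ?_⟩
      apply Finset.Subset.antisymm hU
      intro j hj
      rw [Finset.mem_sdiff] at hj
      have := hj.1
      rw [← h, Finset.mem_union] at this
      tauto
    rw [hinv _ this]; ring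
  · simp

lemma sum_pat {K L : ℕ} [NeZero L] (s : Fin K → ZMod L → ℕ)
    (A : Finset (Fin K)) (τ : Fin K → ZMod L) (G : Finset (Fin K) → ℤ) :
    ∑ t : ZMod L, G (actS s A τ t) = ∑ S ∈ A.powerset, patN s A τ S * G S := by
  unfold patN
  simp_rw [Finset.sum_mul]
  rw [Finset.sum_comm]
  refine Finset.sum_congr rfl fun t _ => ?_
  simp [actS_subset]

lemma theta_top {K L : ℕ} [NeZero L] (s : Fin K → ZMod L → ℕ)
    (hbin : ∀ i t, s i t = 0 ∨ s i t = 1)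
    (A : Finset (Fin K)) (M : ℕ) (hA : A.card = M) (τ : Fin K → ZMod L) :
    (thetaZ s A (M : ℤ) τ : ℤ) = Hcorr s A τ := by
  have h := patN_eq s hbin A A (Finset.Subset.refl _) τ
  simp only [Finset.sdiff_self, Finset.powerset_empty, Finset.sum_singleton, Finset.card_empty,
    pow_zero, one_mul, Finset.union_empty] at h
  rw [← h, patN, thetaZ, Finset.card_filter]
  push_cast
  refine Finset.sum_congr rfl fun t _ => ?_
  have : (((A.filter (fun j => s j (t + τ j) = 1)).card : ℤ) = M) ↔ actS s A τ t = A := by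
    rw [← hA, Nat.cast_inj]
    constructor
    · intro h
      exact Finset.eq_of_subset_of_card_le (actS_subset s A τ t) h.ge
    · intro h
      exact congrArg Finset.card h
  simp only [this]

/-- number of slots where at most `γ - m` users of `B` are active -/
def cumF {K L : ℕ} [NeZero L] (s : Fin K → ZMod L → ℕ) (B : Finset (Fin K)) (γ : ℕ)
    (τ : Fin K → ZMod L) (m : ℕ) : ℤ :=
  ∑ u : ZMod L, if m + (actS s B τ u).card ≤ γ then (1:ℤ) else 0

lemma cumF_step {K L : ℕ} [NeZero L] (s : Fin K → ZMod L → ℕ) (B : Finset (Fin K)) (γ : ℕ)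
    (τ : Fin K → ZMod L) (m : ℕ) :
    cumF s B γ τ m - cumF s B γ τ (m + 1) = (thetaZ s B ((γ : ℤ) - (m : ℤ)) τ : ℤ) := by
  unfold cumF thetaZ
  rw [Finset.card_filter, ← Finset.sum_sub_distrib]
  push_cast
  refine Finset.sum_congr rfl fun t _ => ?_
  change _ = if ((actS s B τ t).card : ℤ) = (γ : ℤ) - m then (1:ℤ) else 0
  split_ifs <;> omega

lemma R_avg {K L : ℕ} [NeZero L] (s : Fin K → ZMod L → ℕ)
    (hbin : ∀ i t, s i t = 0 ∨ s i t = 1) (γ : ℕ) (hγ : 1 ≤ γ) (M : ℕ)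
    (i : Fin K) (hi : (i : ℕ) < M) (τ τs : Fin K → ZMod L) :
    ∑ c : ZMod L, (Rcount s γ i (fun j => if (j : ℕ) < M then τ j else τs j + c) : ℤ) =
      ∑ t : ZMod L, (fun S : Finset (Fin K) => if i ∈ S then
        cumF s (Finset.univ.filter (fun j : Fin K => M ≤ (j : ℕ))) γ τs S.card else 0)
        (actS s (Finset.univ.filter (fun j : Fin K => (j : ℕ) < M)) τ t) := by
  set A := Finset.univ.filter (fun j : Fin K => (j : ℕ) < M) with hA
  set B := Finset.univ.filter (fun j : Fin K => M ≤ (j : ℕ)) with hB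
  unfold Rcount
  simp_rw [Finset.card_filter]
  push_cast
  rw [Finset.sum_comm]
  refine Finset.sum_congr rfl fun t _ => ?_
  have key : ∀ c : ZMod L, (if s i (t + if (i : ℕ) < M then τ i else τs i + c) = 1 ∧
      ∑ j ∈ Finset.univ.erase i, s j (t + if (j : ℕ) < M then τ j else τs j + c) ≤ γ - 1
      then (1:ℤ) else 0) =
      if i ∈ actS s A τ t then
        (if (actS s A τ t).card + (actS s B τs (c + t)).card ≤ γ then (1:ℤ) else 0) else 0 := by
    intro c
    have hmem : i ∈ actS s A τ t ↔ s i (t + τ i) = 1 := by simp [actS, hA, hi]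
    have hcard : ∀ (C : Finset (Fin K)) (ρ : Fin K → ZMod L) (u : ZMod L),
        (actS s C ρ u).card = ∑ j ∈ C, s j (u + ρ j) := by
      intro C ρ u
      unfold actS
      rw [Finset.card_filter]
      refine Finset.sum_congr rfl fun j _ => ?_
      rcases hbin j (u + ρ j) with h | h <;> simp [h]
    have htot : ∑ j, s j (t + if (j : ℕ) < M then τ j else τs j + c) =
        (actS s A τ t).card + (actS s B τs (c + t)).card := by
      rw [hcard, hcard, ← Finset.sum_filter_add_sum_filter_not Finset.univ
        (fun j : Fin K => (j : ℕ) < M)]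
      simp only [not_lt]
      congr 1
      · refine Finset.sum_congr rfl fun j hj => ?_
        have hj2 : (j : ℕ) < M := (Finset.mem_filter.1 hj).2
        simp [hj2]
      · refine Finset.sum_congr rfl fun j hj => ?_
        have hj2 : M ≤ (j : ℕ) := (Finset.mem_filter.1 hj).2
        rw [if_neg (by omega)]
        congr 1
        ring
    have herase := Finset.add_sum_erase Finset.univ
      (fun j => s j (t + if (j : ℕ) < M then τ j else τs j + c)) (Finset.mem_univ i)
    simp only [htot, if_pos hi] at herase
    rw [if_pos hi]
    by_cases h1 : s i (t + τ i) = 1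
    · rw [if_pos (hmem.2 h1)]
      rw [h1] at herase
      simp only [h1, true_and]
      split_ifs <;> omega
    · rw [if_neg (fun h => h1 (hmem.1 h)), if_neg (fun h => h1 h.1)]
  rw [Finset.sum_congr rfl fun c _ => key c]
  by_cases hit : i ∈ actS s A τ t
  · simp only [if_pos hit, cumF]
    exact Equiv.sum_comp (Equiv.addRight t)
      (fun u => if (actS s A τ t).card + (actS s B τs u).card ≤ γ then (1:ℤ) else 0)
  · simp [hit]

lemma coef_eq (F : ℕ → ℤ) (n : ℕ) :
    ∑ k ∈ Finset.range (n + 2), ((n + 1).choose k : ℤ) * ((-1) ^ (n + 1 - k) * F (k + 1)) =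
      ∑ k ∈ Finset.range (n + 1), (-1) ^ (n + 1 - k) * (n.choose k : ℤ) *
        (F (k + 1) - F (k + 1 + 1)) := by
  simp_rw [mul_sub]
  rw [Finset.sum_sub_distrib]
  have e1 : ∑ k ∈ Finset.range (n + 1), (-1) ^ (n + 1 - k) * (n.choose k : ℤ) * F (k + 1) =
      ∑ k ∈ Finset.range (n + 2), (-1) ^ (n + 1 - k) * (n.choose k : ℤ) * F (k + 1) := by
    rw [Finset.sum_range_succ _ (n + 1)]
    simp
  rw [e1, Finset.sum_range_succ' _ (n + 1), Finset.sum_range_succ' _ (n + 1), add_sub_right_comm,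
    ← Finset.sum_sub_distrib]
  congr 1
  · refine Finset.sum_congr rfl fun k hk => ?_
    have hk' : k ≤ n := by simpa [Nat.lt_succ_iff] using hk
    rw [Nat.choose_succ_succ, show n + 1 - k = (n + 1 - (k + 1)) + 1 by omega]
    push_cast
    ring
  · simp

lemma coef_sum {K : ℕ} (A : Finset (Fin K)) (i : Fin K) (hi : i ∈ A) (n : ℕ)
    (hA : A.card = n + 2) (F : ℕ → ℤ) :
    ∑ S ∈ A.powerset, (-1 : ℤ) ^ (A \ S).card * (if i ∈ S then F S.card else 0) =
      ∑ k ∈ Finset.range (n + 2), ((n + 1).choose k : ℤ) * ((-1) ^ (n + 1 - k) * F (k + 1)) := by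
  have hc : (A.erase i).card = n + 1 := by rw [Finset.card_erase_of_mem hi]; omega
  conv_lhs => rw [← Finset.insert_erase hi]
  rw [Finset.sum_powerset_insert (Finset.notMem_erase i A), Finset.sum_eq_zero, zero_add]
  · have := Finset.sum_powerset_apply_card (fun k => (-1 : ℤ) ^ (n + 1 - k) * F (k + 1))
      (x := A.erase i)
    rw [hc] at this
    simp only [nsmul_eq_mul] at this
    rw [← this]
    refine Finset.sum_congr rfl fun U hU => ?_
    rw [Finset.mem_powerset] at hU
    have hiU : i ∉ U := fun h => Finset.notMem_erase i A (hU h)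
    rw [if_pos (Finset.mem_insert_self _ _), Finset.card_insert_of_notMem hiU,
      Finset.card_sdiff_of_subset (Finset.insert_subset_insert _ hU),
      Finset.card_insert_of_notMem hiU, Finset.insert_erase hi, hA]
    congr 2
    omega
  · intro U hU
    rw [Finset.mem_powerset] at hU
    have hiU : i ∉ U := fun h => Finset.notMem_erase i A (hU h)
    simp [hiU]

theorem stmt12 (K L γ M : ℕ) (hK : 3 ≤ K) (hL : 1 ≤ L) [NeZero L]
    (s : Fin K → ZMod L → ℕ) (hbin : ∀ i t, s i t = 0 ∨ s i t = 1)
    (hγ1 : 1 ≤ γ) (hγK : γ < K) (hM2 : 2 ≤ M) (hMK : M < K)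
    (hTI : IsTI s γ)
    (hsub : ∀ T : Finset (Fin K), T.card = M - 1 →
      ∀ A ⊆ T, A.Nonempty →
        ∀ τ τ' : Fin K → ZMod L, Hcorr s A τ = Hcorr s A τ') :
    ∀ τ τ' τs : Fin K → ZMod L,
      ((thetaZ s (Finset.univ.filter (fun j : Fin K => (j : ℕ) < M)) (M : ℤ) τ' : ℤ)
          - (thetaZ s (Finset.univ.filter (fun j : Fin K => (j : ℕ) < M)) (M : ℤ) τ : ℤ)) *
        ∑ i ∈ Finset.Icc 1 (M - 1),
          (-1) ^ (M - i) * (Nat.choose (M - 2) (i - 1) : ℤ) *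
            (thetaZ s (Finset.univ.filter (fun j : Fin K => M ≤ (j : ℕ)))
              ((γ : ℤ) - (i : ℤ)) τs : ℤ) = 0 := by
  intro τ τ' τs
  obtain ⟨n, rfl⟩ : ∃ n, M = n + 2 := ⟨M - 2, by omega⟩
  set A := Finset.univ.filter (fun j : Fin K => (j : ℕ) < n + 2) with hA
  set B := Finset.univ.filter (fun j : Fin K => n + 2 ≤ (j : ℕ)) with hB
  have hAc : A.card = n + 2 := by
    rw [hA, Fin.card_filter_val_lt]
    omega
  let i : Fin K := ⟨0, by omega⟩
  have hi : (i : ℕ) < n + 2 := by simp [i]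
  have hiA : i ∈ A := by simp [hA, i]
  have hinv : ∀ T, T ⊂ A → Hcorr s T τ = Hcorr s T τ' := by
    intro T hT
    rcases T.eq_empty_or_nonempty with rfl | hne
    · simp [Hcorr]
    · have hlt := Finset.card_lt_card hT
      obtain ⟨T', h1, h2, h3⟩ := Finset.exists_subsuperset_card_eq hT.subset
        (n := n + 2 - 1) (by omega) (by omega)
      exact hsub T' h3 T h1 hne τ τ'
  have hR : ∀ ρ ρ' : Fin K → ZMod L, Rcount s γ i ρ = Rcount s γ i ρ' := by
    intro ρ ρ'
    have h := hTI i ρ ρ'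
    unfold R at h
    have hL0 : (L : ℚ) ≠ 0 := by exact_mod_cast NeZero.ne L
    rw [div_left_inj' hL0] at h
    exact_mod_cast h
  have hsum := R_avg s hbin γ hγ1 (n + 2) i hi τ τs
  have hsum' := R_avg s hbin γ hγ1 (n + 2) i hi τ' τs
  rw [Finset.sum_congr rfl fun c _ => congrArg (Nat.cast : ℕ → ℤ) (hR _ (fun j => if (j : ℕ) < n + 2 then τ j else τs j + c)),
    hsum, ← hA, ← hB,
    sum_pat s A τ (fun S : Finset (Fin K) => if i ∈ S then cumF s B γ τs S.card else 0),
    sum_pat s A τ' (fun S : Finset (Fin K) => if i ∈ S then cumF s B γ τs S.card else 0)] at hsum'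
  rw [← sub_eq_zero, ← neg_eq_zero, neg_sub, ← Finset.sum_sub_distrib] at hsum'
  have e : ∀ S ∈ A.powerset, patN s A τ' S * (if i ∈ S then cumF s B γ τs S.card else 0) -
      patN s A τ S * (if i ∈ S then cumF s B γ τs S.card else 0) =
      ((Hcorr s A τ' : ℤ) - Hcorr s A τ) *
        ((-1 : ℤ) ^ (A \ S).card * (if i ∈ S then cumF s B γ τs S.card else 0)) := by
    intro S hS
    rw [← sub_mul, patN_diff s hbin A S (Finset.mem_powerset.1 hS) τ τ' hinv]
    ring
  rw [Finset.sum_congr rfl e, ← Finset.mul_sum, coef_sum A i hiA n hAc, coef_eq] at hsum'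
  rw [theta_top s hbin A (n + 2) hAc, theta_top s hbin A (n + 2) hAc, ← hsum']
  congr 1
  rw [show n + 2 - 1 = n + 1 by omega, Finset.range_eq_Ico,
    ← Finset.Ico_add_one_right_eq_Icc, Finset.sum_Ico_eq_sum_range, Finset.sum_Ico_eq_sum_range]
  refine Finset.sum_congr (by simp) fun k _ => ?_
  rw [cumF_step, show n + 2 - (1 + k) = n + 1 - (0 + k) by omega, show n + 2 - 2 = n by omega,
    show 1 + k - 1 = 0 + k by omega, show 1 + k = 0 + k + 1 by omega]
end

section
/- Let S = {s_1,…,s_K} be a protocol sequence set, let γ satisfy 1 ≤ γ < K, and let M satisfy 2 ≤ M < K. Set A = {1,…,M}. Suppose S is TI with MPR capability γ, every subfamily of S consisting of M−1 sequences is SI, and all K sequences have the same duty factor f ∈ ℚ. Then for any two systems of shifts τ = (τ_1,…,τ_M), τ′ = (τ′_1,…,τ′_M) on A, δ_M(τ→τ′; A) · Σ_{i=1}^{M−1} (−1)^{M−i} · binom(M−2, i−1) · binom(K−M, γ−i) · f^{γ−i} · (1−f)^{K−M−γ+i} = 0, where the terms with γ − i < 0 or γ − i > K − M are understood to be zero.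 -/
open Finset

/-- Weighted count: sum over slots of the product over `C` times `g` of the number of ones in `B`. -/
def FF {K L : ℕ} [NeZero L] (s : Fin K → ZMod L → ℕ) (C B : Finset (Fin K)) (g : ℕ → ℚ)
    (τ : Fin K → ZMod L) : ℚ :=
  ∑ t : ZMod L, (∏ j ∈ C, (s j (t + τ j) : ℚ)) * g (∑ j ∈ B, s j (t + τ j))

lemma FF_empty {K L : ℕ} [NeZero L] (s : Fin K → ZMod L → ℕ) (C : Finset (Fin K)) (g : ℕ → ℚ)
    (τ : Fin K → ZMod L) : FF s C ∅ g τ = g 0 * Hcorr s C τ := by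
  simp [FF, Hcorr, Finset.mul_sum, mul_comm]

lemma FF_insert {K L : ℕ} [NeZero L] (s : Fin K → ZMod L → ℕ)
    (hbin : ∀ i t, s i t = 0 ∨ s i t = 1) (C B : Finset (Fin K)) (k : Fin K)
    (hkC : k ∉ C) (hkB : k ∉ B) (g : ℕ → ℚ) (τ : Fin K → ZMod L) :
    FF s C (insert k B) g τ = FF s C B g τ + FF s (insert k C) B (fwdDiff 1 g) τ := by
  simp only [FF, ← Finset.sum_add_distrib]
  refine Finset.sum_congr rfl fun t _ => ?_
  rw [Finset.sum_insert hkB, Finset.prod_insert hkC]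
  rcases hbin k (t + τ k) with h | h
  · simp [h]
  · simp [h, fwdDiff, add_comm 1]; ring

lemma FF_top {K L : ℕ} [NeZero L] (s : Fin K → ZMod L → ℕ)
    (hbin : ∀ i t, s i t = 0 ∨ s i t = 1) (τ τ' : Fin K → ZMod L) (B : Finset (Fin K)) :
    ∀ (C : Finset (Fin K)), C.Nonempty → Disjoint C B →
      (∀ A' ⊂ C ∪ B, A'.Nonempty → Hcorr s A' τ = Hcorr s A' τ') → ∀ g : ℕ → ℚ,
      FF s C B g τ' - FF s C B g τ =
        ((fwdDiff 1)^[B.card] g) 0 * ((Hcorr s (C ∪ B) τ' : ℚ) - Hcorr s (C ∪ B) τ) := by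
  induction B using Finset.induction_on with
  | empty => intro C _ _ _ g; simp [FF_empty]; ring
  | insert k B hk ih =>
    intro C hC hd hH g
    rw [Finset.disjoint_insert_right] at hd
    have hss : C ∪ B ⊂ C ∪ insert k B := by
      rw [Finset.union_insert]
      exact Finset.ssubset_insert (by simp [hk, hd.1])
    rw [FF_insert s hbin C B k hd.1 hk, FF_insert s hbin C B k hd.1 hk]
    have h1 := ih C hC hd.2 (fun A' hA' hne => hH A' (hA'.trans hss) hne) g
    rw [hH _ hss (hC.mono Finset.subset_union_left), sub_self, mul_zero] at h1
    have he : insert k C ∪ B = C ∪ insert k B := by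
      rw [Finset.insert_union, Finset.union_insert]
    have h2 := ih (insert k C) (Finset.insert_nonempty _ _)
      (by rw [Finset.disjoint_insert_left]; exact ⟨hk, hd.2⟩)
      (by rw [he]; exact hH) (fwdDiff 1 g)
    rw [he] at h2
    rw [Finset.card_insert_of_notMem hk, Function.iterate_succ_apply]
    linarith

/-- Averaging operator. -/
def TT (f : ℚ) (g : ℕ → ℚ) : ℕ → ℚ := fun n => (1 - f) * g n + f * g (n + 1)

lemma FF_avg_one {K L : ℕ} [NeZero L] (s : Fin K → ZMod L → ℕ)
    (hbin : ∀ i t, s i t = 0 ∨ s i t = 1) (f : ℚ) (hf : ∀ i, duty (s i) = f)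
    (C B : Finset (Fin K)) (k : Fin K)
    (hkC : k ∉ C) (hkB : k ∉ B) (g : ℕ → ℚ) (τ : Fin K → ZMod L) :
    ∑ x : ZMod L, FF s C (insert k B) g (Function.update τ k x) = L * FF s C B (TT f g) τ := by
  unfold FF
  rw [Finset.sum_comm, Finset.mul_sum]
  refine Finset.sum_congr rfl fun t _ => ?_
  have hL : (L : ℚ) ≠ 0 := by exact_mod_cast NeZero.ne L
  have h1 : ∀ x, ∏ j ∈ C, (s j (t + Function.update τ k x j) : ℚ) = ∏ j ∈ C, (s j (t + τ j) : ℚ) := by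
    intro x
    refine Finset.prod_congr rfl fun j hj => ?_
    rw [Function.update_of_ne (by rintro rfl; exact hkC hj)]
  have h2 : ∀ x, ∑ j ∈ B, s j (t + Function.update τ k x j) = ∑ j ∈ B, s j (t + τ j) := by
    intro x
    refine Finset.sum_congr rfl fun j hj => ?_
    rw [Function.update_of_ne (by rintro rfl; exact hkB hj)]
  simp only [Finset.sum_insert hkB, h1, h2, Function.update_self]
  rw [← Finset.mul_sum, mul_left_comm]
  congr 1
  generalize ∑ j ∈ B, s j (t + τ j) = n
  have h3 : ∀ x, g (s k (t + x) + n) = g n + (s k (t + x) : ℚ) * (g (n + 1) - g n) := by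
    intro x
    rcases hbin k (t + x) with h | h
    · simp [h]
    · simp [h, add_comm 1]
  have h4 : ∑ x : ZMod L, (s k (t + x) : ℚ) = L * f := by
    rw [← hf k, duty, mul_div_cancel₀ _ hL]
    exact Fintype.sum_equiv (Equiv.addLeft t) _ _ (fun x => rfl)
  simp only [h3, Finset.sum_add_distrib, ← Finset.sum_mul, h4]
  simp [TT, ZMod.card]
  ring

lemma FF_avg {K L : ℕ} [NeZero L] (s : Fin K → ZMod L → ℕ)
    (hbin : ∀ i t, s i t = 0 ∨ s i t = 1) (f : ℚ) (hf : ∀ i, duty (s i) = f)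
    (C B D : Finset (Fin K)) : ∀ (g : ℕ → ℚ), Disjoint C D → Disjoint B D →
    (∀ τ τ', FF s C (B ∪ D) g τ = FF s C (B ∪ D) g τ') →
    ∀ τ τ', FF s C B ((TT f)^[D.card] g) τ = FF s C B ((TT f)^[D.card] g) τ' := by
  have hL : (L : ℚ) ≠ 0 := by exact_mod_cast NeZero.ne L
  induction D using Finset.induction_on with
  | empty => intro g _ _ h; simpa using h
  | insert k D hk ih =>
    intro g hC hB h
    rw [Finset.disjoint_insert_right] at hC hB
    rw [Finset.card_insert_of_notMem hk, Function.iterate_succ]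
    refine ih (TT f g) hC.2 hB.2 ?_
    intro τ τ'
    apply mul_left_cancel₀ hL
    have hkn : k ∉ B ∪ D := by simp [hk, hB.1]
    rw [← FF_avg_one s hbin f hf C (B ∪ D) k hC.1 hkn,
      ← FF_avg_one s hbin f hf C (B ∪ D) k hC.1 hkn]
    refine Finset.sum_congr rfl fun x _ => ?_
    rw [← Finset.union_insert]
    exact h _ _

lemma TT_iter (f : ℚ) (N : ℕ) : ∀ (g : ℕ → ℚ) (n : ℕ), (TT f)^[N] g n =
    ∑ r ∈ Finset.range (N + 1), (N.choose r : ℚ) * f ^ r * (1 - f) ^ (N - r) * g (n + r) := by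
  let E : Module.End ℚ (ℕ → ℚ) := LinearMap.funLeft ℚ ℚ (fun n => n + 1)
  have hE : ∀ (r : ℕ) (g : ℕ → ℚ) (n : ℕ), (E ^ r) g n = g (n + r) := by
    intro r
    induction r with
    | zero => intro g n; rfl
    | succ r ih =>
      intro g n
      rw [pow_succ, Module.End.mul_apply, ih]
      rfl
  have hT : TT f = ⇑(f • E + (1 - f) • (1 : Module.End ℚ (ℕ → ℚ))) := by
    ext g n
    simp [TT, E, LinearMap.funLeft_apply]
    ring
  have hc : Commute (f • E) ((1 - f) • (1 : Module.End ℚ (ℕ → ℚ))) :=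
    (Commute.one_right _).smul_right _
  intro g n
  rw [hT, ← Module.End.coe_pow, hc.add_pow]
  rw [LinearMap.sum_apply, Finset.sum_apply]
  refine Finset.sum_congr rfl fun r _ => ?_
  rw [← Nat.cast_comm, ← nsmul_eq_mul]
  simp only [smul_pow, one_pow, LinearMap.smul_apply, mul_smul_comm, mul_one, Pi.smul_apply, hE,
    smul_eq_mul]
  rw [nsmul_eq_mul]
  ring

lemma coef_eq_s13 (K γ M : ℕ) (f : ℚ) (hγ1 : 1 ≤ γ) (hM2 : 2 ≤ M) :
    ((fwdDiff 1)^[M - 1] ((TT f)^[K - M] (fun n => if n ≤ γ - 1 then (1 : ℚ) else 0))) 0 =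
    ∑ i ∈ Finset.Icc 1 (M - 1),
          (if i ≤ γ then
              (-1) ^ (M - i) * (Nat.choose (M - 2) (i - 1) : ℚ) *
                (Nat.choose (K - M) (γ - i) : ℚ) *
                f ^ (γ - i) * (1 - f) ^ (K - M - (γ - i))
            else 0) := by
  obtain ⟨m, rfl⟩ := Nat.exists_eq_add_of_le' hM2
  obtain ⟨c, rfl⟩ := Nat.exists_eq_add_of_le' hγ1
  generalize hN : K - (m + 2) = N
  have hd : ∀ n, fwdDiff 1 ((TT f)^[N] (fun n => if n ≤ c + 1 - 1 then (1 : ℚ) else 0)) n =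
      if n ≤ c then - ((N.choose (c - n) : ℚ) * f ^ (c - n) * (1 - f) ^ (N - (c - n))) else 0 := by
    intro n
    rw [fwdDiff, TT_iter, TT_iter, ← Finset.sum_sub_distrib]
    have : ∀ r ∈ Finset.range (N + 1),
        ((N.choose r : ℚ) * f ^ r * (1 - f) ^ (N - r) * (if n + 1 + r ≤ c + 1 - 1 then (1 : ℚ) else 0)
        - (N.choose r : ℚ) * f ^ r * (1 - f) ^ (N - r) * (if n + r ≤ c + 1 - 1 then (1 : ℚ) else 0))
        = if r = c - n then (if n ≤ c then
          - ((N.choose (c - n) : ℚ) * f ^ (c - n) * (1 - f) ^ (N - (c - n))) else 0) else 0 := by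
      intro r _
      by_cases h1 : n ≤ c
      · by_cases h2 : r = c - n
        · subst h2
          rw [if_neg (by omega), if_pos (by omega), if_pos rfl, if_pos h1]; ring
        · rw [if_neg h2]
          by_cases h3 : n + r ≤ c
          · rw [if_pos (by omega), if_pos (by omega)]; ring
          · rw [if_neg (by omega), if_neg (by omega)]; ring
      · rw [if_neg (by omega), if_neg (by omega)]; simp [h1]
    rw [Finset.sum_congr rfl this, Finset.sum_ite_eq']
    split_ifs with h1 h2
    · rfl
    · rfl
    · rw [Nat.choose_eq_zero_of_lt (by rw [Finset.mem_range] at h1; omega)]; simp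
    · rfl
  rw [show m + 2 - 1 = m + 1 by omega, Function.iterate_succ_apply, fwdDiff_iter_eq_sum_shift,
    Finset.sum_bij (fun i _ => i + 1)]
  · intro a ha; simp at ha ⊢; omega
  · intro a _ b _ h; simpa using h
  · intro b hb
    simp at hb
    exact ⟨b - 1, by simp; omega, by omega⟩
  · intro a ha
    simp only [Finset.mem_range] at ha
    rw [show (0 + a • 1 : ℕ) = a by simp, hd]
    simp only [add_le_add_iff_right, Nat.add_sub_cancel, Nat.add_sub_add_right]
    split_ifs with h
    · rw [show m + 2 - (a + 1) = (m - a) + 1 by omega]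
      simp [zsmul_eq_mul, pow_succ]
      ring
    · simp

lemma theta_eq {K L : ℕ} [NeZero L] (s : Fin K → ZMod L → ℕ)
    (hbin : ∀ i t, s i t = 0 ∨ s i t = 1) (A : Finset (Fin K)) (M : ℕ) (hA : A.card = M)
    (τ : Fin K → ZMod L) : thetaZ s A (M : ℤ) τ = Hcorr s A τ := by
  rw [thetaZ, Hcorr, Finset.card_filter]
  refine Finset.sum_congr rfl fun t _ => ?_
  simp only [← hA, Nat.cast_inj, Finset.card_filter_eq_iff]
  split_ifs with h
  · exact (Finset.prod_eq_one h).symm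
  · push Not at h
    obtain ⟨j, hj, hne⟩ := h
    exact (Finset.prod_eq_zero hj ((hbin j _).resolve_right hne)).symm

lemma R_eq {K L : ℕ} [NeZero L] (s : Fin K → ZMod L → ℕ)
    (hbin : ∀ i t, s i t = 0 ∨ s i t = 1) (γ : ℕ) (i : Fin K) (τ : Fin K → ZMod L) :
    (Rcount s γ i τ : ℚ) =
      FF s {i} (Finset.univ.erase i) (fun n => if n ≤ γ - 1 then (1 : ℚ) else 0) τ := by
  rw [Rcount, FF, Finset.card_filter, Nat.cast_sum]
  refine Finset.sum_congr rfl fun t _ => ?_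
  rw [Finset.prod_singleton]
  rcases hbin i (t + τ i) with h | h <;> simp [h]

theorem stmt13 (K L γ M : ℕ) (hK : 3 ≤ K) (hL : 1 ≤ L) [NeZero L]
    (s : Fin K → ZMod L → ℕ) (hbin : ∀ i t, s i t = 0 ∨ s i t = 1)
    (hγ1 : 1 ≤ γ) (hγK : γ < K) (hM2 : 2 ≤ M) (hMK : M < K)
    (hTI : IsTI s γ)
    (hsub : ∀ T : Finset (Fin K), T.card = M - 1 →
      ∀ A ⊆ T, A.Nonempty →
        ∀ τ τ' : Fin K → ZMod L, Hcorr s A τ = Hcorr s A τ')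
    (f : ℚ) (hf : ∀ i, duty (s i) = f) :
    ∀ τ τ' : Fin K → ZMod L,
      (((thetaZ s (Finset.univ.filter (fun j : Fin K => (j : ℕ) < M)) (M : ℤ) τ' : ℤ)
          - (thetaZ s (Finset.univ.filter (fun j : Fin K => (j : ℕ) < M)) (M : ℤ) τ : ℤ) : ℤ) : ℚ) *
        ∑ i ∈ Finset.Icc 1 (M - 1),
          (if i ≤ γ then
              (-1) ^ (M - i) * (Nat.choose (M - 2) (i - 1) : ℚ) *
                (Nat.choose (K - M) (γ - i) : ℚ) *
                f ^ (γ - i) * (1 - f) ^ (K - M - (γ - i))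
            else 0) = 0 := by
  intro τ τ'
  have hL0 : (L : ℚ) ≠ 0 := by exact_mod_cast NeZero.ne L
  set A : Finset (Fin K) := Finset.univ.filter (fun j : Fin K => (j : ℕ) < M) with hAdef
  have hA : A.card = M := by
    rw [hAdef, Fin.card_filter_val_lt]; omega
  let i0 : Fin K := ⟨0, by omega⟩
  have hi0 : i0 ∈ A := by simp [hAdef, i0]; omega
  have hun : (A.erase i0) ∪ (Finset.univ \ A) = Finset.univ.erase i0 := by
    ext j
    by_cases hj : j = i0
    · subst hj; simp [hi0]
    · simp [hj]; tauto
  have hcD : (Finset.univ \ A).card = K - M := by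
    rw [Finset.card_sdiff_of_subset (Finset.subset_univ _), hA]; simp
  have hcB : (A.erase i0).card = M - 1 := by rw [Finset.card_erase_of_mem hi0, hA]
  have hAB : {i0} ∪ A.erase i0 = A := by
    rw [← Finset.insert_eq, Finset.insert_erase hi0]
  have hconst := FF_avg s hbin f hf {i0} (A.erase i0) (Finset.univ \ A)
    (fun n => if n ≤ γ - 1 then (1 : ℚ) else 0)
    (by simp [hi0])
    (Finset.disjoint_of_subset_left (Finset.erase_subset _ _) Finset.disjoint_sdiff)
    (by
      intro σ σ'
      rw [hun, ← R_eq s hbin, ← R_eq s hbin]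
      have h := hTI i0 σ σ'
      unfold R at h
      exact (div_left_inj' hL0).1 h)
  have htop := FF_top s hbin τ τ' (A.erase i0) {i0} (by simp) (by simp)
    (by
      rw [hAB]
      intro A' hA' hne
      have hlt := Finset.card_lt_card hA'
      obtain ⟨T, hT, hTc⟩ := Finset.exists_superset_card_eq (s := A') (n := M - 1)
        (by omega) (by simp; omega)
      exact hsub T hTc A' hT hne τ τ')
    ((TT f)^[(Finset.univ \ A).card] (fun n => if n ≤ γ - 1 then (1 : ℚ) else 0))
  rw [hconst τ' τ, sub_self, hAB, hcB, hcD, coef_eq_s13 K γ M f hγ1 hM2] at htop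
  rw [theta_eq s hbin A M hA, theta_eq s hbin A M hA]
  push_cast
  rw [mul_comm]
  exact htop.symm
end

section
/- Let S = {s_1,…,s_K} (K ≥ 2) be a protocol sequence set. If S is TI with MPR capability γ = 1 and R_i > 0 for every user i, then S is SI. -/
open Finset

/-- Correlation with `s i`, the sequences in `B` and the complements of those in `C`. -/
def mixCorr {K L : ℕ} [NeZero L] (s : Fin K → ZMod L → ℕ) (i : Fin K)
    (B C : Finset (Fin K)) (τ : Fin K → ZMod L) : ℚ :=
  ∑ t : ZMod L, (s i (t + τ i) : ℚ) * (∏ j ∈ B, (s j (t + τ j) : ℚ)) *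
    ∏ j ∈ C, (1 - (s j (t + τ j) : ℚ))

lemma mixCorr_full {K L : ℕ} [NeZero L] (s : Fin K → ZMod L → ℕ)
    (hbin : ∀ i t, s i t = 0 ∨ s i t = 1) (i : Fin K) (τ : Fin K → ZMod L) :
    mixCorr s i ∅ (univ.erase i) τ = Rcount s 1 i τ := by
  unfold mixCorr Rcount
  rw [Finset.card_filter]
  push_cast
  refine Finset.sum_congr rfl fun t _ => ?_
  simp only [Finset.prod_empty, mul_one, Nat.sub_self, Nat.le_zero, Finset.sum_eq_zero_iff]
  by_cases h : ∀ j ∈ univ.erase i, s j (t + τ j) = 0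
  · rw [Finset.prod_eq_one (fun j hj => by rw [h j hj]; simp)]
    rcases hbin i (t + τ i) with h1 | h1
    · simp [h1]
    · rw [if_pos ⟨h1, h⟩]; simp [h1]
  · rw [if_neg (fun h' => h h'.2)]
    push Not at h
    obtain ⟨j, hj, hj0⟩ := h
    rw [Finset.prod_eq_zero hj, mul_zero]
    have := (hbin j (t + τ j)).resolve_left hj0
    simp [this]

lemma mixCorr_avg {K L : ℕ} [NeZero L] (s : Fin K → ZMod L → ℕ) (i j : Fin K)
    (C : Finset (Fin K)) (hij : j ≠ i) (hj : j ∉ C) (τ : Fin K → ZMod L) :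
    ∑ x : ZMod L, mixCorr s i ∅ (insert j C) (Function.update τ j x) =
      mixCorr s i ∅ C τ * ∑ x : ZMod L, (1 - (s j x : ℚ)) := by
  unfold mixCorr
  rw [Finset.sum_comm, Finset.sum_mul]
  refine Finset.sum_congr rfl fun t _ => ?_
  rw [← Equiv.sum_comp (Equiv.addLeft t) (fun x => (1 - (s j x : ℚ))), Finset.mul_sum]
  refine Finset.sum_congr rfl fun x _ => ?_
  rw [Finset.prod_insert hj, Function.update_of_ne hij.symm]
  have : ∏ k ∈ C, (1 - (s k (t + Function.update τ j x k) : ℚ)) =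
      ∏ k ∈ C, (1 - (s k (t + τ k) : ℚ)) := by
    refine Finset.prod_congr rfl fun k hk => ?_
    rw [Function.update_of_ne (by rintro rfl; exact hj hk)]
  rw [this]
  simp
  ring

lemma mixCorr_step {K L : ℕ} [NeZero L] (s : Fin K → ZMod L → ℕ) (i j : Fin K)
    (B C : Finset (Fin K)) (hB : j ∉ B) (hC : j ∉ C) (τ : Fin K → ZMod L) :
    mixCorr s i (insert j B) C τ = mixCorr s i B C τ - mixCorr s i B (insert j C) τ := by
  unfold mixCorr
  rw [← Finset.sum_sub_distrib]
  refine Finset.sum_congr rfl fun t _ => ?_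
  rw [Finset.prod_insert hB, Finset.prod_insert hC]
  ring

theorem stmt14 (K L : ℕ) (hK : 2 ≤ K) (hL : 1 ≤ L) [NeZero L]
    (s : Fin K → ZMod L → ℕ) (hbin : ∀ i t, s i t = 0 ∨ s i t = 1)
    (hTI : IsTI s 1)
    (hR : ∀ (i : Fin K) (τ : Fin K → ZMod L), 0 < R s 1 i τ) :
    IsSI s := by
  have hL0 : (L : ℚ) ≠ 0 := by exact_mod_cast NeZero.ne L
  intro A hA τ τ'
  obtain ⟨i, hi⟩ := hA
  have hfull : ∀ τ τ', mixCorr s i ∅ (univ.erase i) τ = mixCorr s i ∅ (univ.erase i) τ' := by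
    intro τ τ'
    rw [mixCorr_full s hbin, mixCorr_full s hbin]
    have := hTI i τ τ'
    unfold R at this
    exact (div_left_inj' hL0).1 this
  have hpos : ∀ j, j ≠ i → (∑ x : ZMod L, (1 - (s j x : ℚ))) ≠ 0 := by
    intro j hj
    have h := hR i (fun _ => 0)
    have h2 : 0 < Rcount s 1 i (fun _ => 0) := by
      rcases Nat.eq_zero_or_pos (Rcount s 1 i (fun _ => 0)) with h0 | h0
      · simp [R, h0] at h
      · exact h0
    obtain ⟨t, ht⟩ := Finset.card_pos.1 h2
    simp only [Finset.mem_filter, Nat.sub_self, Nat.le_zero, Finset.sum_eq_zero_iff] at ht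
    have hjt := ht.2.2 j (by simp [hj])
    apply ne_of_gt
    refine Finset.sum_pos' (fun x _ => ?_) ⟨t + 0, mem_univ _, ?_⟩
    · rcases hbin j x with h | h <;> simp [h]
    · rw [hjt]; simp
  have h1 : ∀ D : Finset (Fin K), ∀ τ τ',
      mixCorr s i ∅ (univ.erase i \ D) τ = mixCorr s i ∅ (univ.erase i \ D) τ' := by
    intro D
    induction D using Finset.induction_on with
    | empty => simpa using hfull
    | insert j D hjD ih =>
      by_cases hji : j = i
      · have : univ.erase i \ insert j D = univ.erase i \ D := by
          ext k; simp only [mem_sdiff, mem_erase, mem_insert]; grind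
        rw [this]; exact ih
      · have he : univ.erase i \ D = insert j (univ.erase i \ insert j D) := by
          ext k; simp only [mem_sdiff, mem_erase, mem_insert, mem_univ]; grind
        rw [he] at ih
        intro τ τ'
        have hj : j ∉ univ.erase i \ insert j D := by simp
        apply mul_right_cancel₀ (hpos j hji)
        rw [← mixCorr_avg s i j _ hji hj, ← mixCorr_avg s i j _ hji hj]
        exact Finset.sum_congr rfl fun x _ => ih _ _
  have h2 : ∀ B C : Finset (Fin K), i ∉ B → i ∉ C → Disjoint B C → ∀ τ τ',
      mixCorr s i B C τ = mixCorr s i B C τ' := by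
    intro B
    induction B using Finset.induction_on with
    | empty =>
      intro C _ hC _
      have : C = univ.erase i \ (univ.erase i \ C) := by
        ext k; simp only [mem_sdiff, mem_erase, mem_univ]; grind
      rw [this]; exact h1 _
    | insert j B hjB ih =>
      intro C hB hC hd τ τ'
      rw [Finset.disjoint_insert_left] at hd
      rw [mem_insert, not_or] at hB
      rw [mixCorr_step s i j B C hjB hd.1, mixCorr_step s i j B C hjB hd.1,
        ih C hB.2 hC hd.2 τ τ', ih (insert j C) hB.2 (by simp [hB.1, hC])
          (by rw [Finset.disjoint_insert_right]; exact ⟨hjB, hd.2⟩) τ τ']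
  have h3 : ∀ τ, (Hcorr s A τ : ℚ) = mixCorr s i (A.erase i) ∅ τ := by
    intro τ
    unfold Hcorr mixCorr
    push_cast
    refine Finset.sum_congr rfl fun t _ => ?_
    rw [Finset.prod_empty, mul_one, Finset.mul_prod_erase A (fun j => (s j (t + τ j) : ℚ)) hi]
  have h4 : (Hcorr s A τ : ℚ) = Hcorr s A τ' := by
    rw [h3, h3]
    exact h2 _ _ (by simp) (by simp) (by simp) _ _
  exact_mod_cast h4
end

section
/- Let S = {s_1,…,s_K} (K ≥ 2) be a protocol sequence set. If S is TI with MPR capability γ = K−1 and R_i > 0 for every user i, then S is SI. -/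
open Finset

theorem sum_update_aux {K L : ℕ} [NeZero L] (s : Fin K → ZMod L → ℕ)
    (A : Finset (Fin K)) (j : Fin K) (hj : j ∈ A) (τ : Fin K → ZMod L) :
    ∑ x : ZMod L, Hcorr s A (Function.update τ j x)
      = (∑ x : ZMod L, s j x) * Hcorr s (A.erase j) τ := by
  unfold Hcorr
  rw [Finset.sum_comm, Finset.mul_sum]
  refine Finset.sum_congr rfl fun t _ => ?_
  have h1 : ∀ x : ZMod L, ∏ k ∈ A, s k (t + Function.update τ j x k)
      = s j (t + x) * ∏ k ∈ A.erase j, s k (t + τ k) := by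
    intro x
    rw [← Finset.mul_prod_erase A _ hj, Function.update_self]
    congr 1
    refine Finset.prod_congr rfl fun k hk => ?_
    rw [Function.update_of_ne (Finset.ne_of_mem_erase hk)]
  simp_rw [h1]
  rw [← Finset.sum_mul]
  congr 1
  exact Equiv.sum_comp (Equiv.addLeft t) (s j)

theorem count_aux {K L : ℕ} (hK : 2 ≤ K) [NeZero L] (s : Fin K → ZMod L → ℕ)
    (hbin : ∀ i t, s i t = 0 ∨ s i t = 1) (i : Fin K) (τ : Fin K → ZMod L) :
    Rcount s (K - 1) i τ + Hcorr s Finset.univ τ = ∑ x : ZMod L, s i x := by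
  rw [← Equiv.sum_comp (Equiv.addRight (τ i)) (s i)]
  unfold Rcount Hcorr
  rw [Finset.card_filter, ← Finset.sum_add_distrib]
  refine Finset.sum_congr rfl fun t _ => ?_
  rw [← Finset.mul_prod_erase Finset.univ _ (Finset.mem_univ i)]
  simp only [Equiv.coe_addRight]
  rcases hbin i (t + τ i) with h | h
  · simp [h]
  · have hc : (Finset.univ.erase i).card = K - 1 := by simp
    by_cases hall : ∀ k ∈ Finset.univ.erase i, s k (t + τ k) = 1
    · rw [Finset.prod_congr rfl hall, Finset.sum_congr rfl hall]
      simp [h]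
      omega
    · push Not at hall
      obtain ⟨k, hk, hne⟩ := hall
      have h0 : s k (t + τ k) = 0 := (hbin k _).resolve_right hne
      rw [Finset.prod_eq_zero hk h0]
      have hle : ∑ j ∈ Finset.univ.erase i, s j (t + τ j) ≤ K - 1 - 1 := by
        rw [← Finset.add_sum_erase _ _ hk, h0, zero_add]
        calc ∑ j ∈ (Finset.univ.erase i).erase k, s j (t + τ j)
            ≤ ∑ j ∈ (Finset.univ.erase i).erase k, 1 :=
              Finset.sum_le_sum fun j _ => by rcases hbin j (t + τ j) with h | h <;> omega
          _ = K - 1 - 1 := by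
              rw [Finset.sum_const, Finset.card_erase_of_mem hk, hc]; simp
      simp [h, hle]

theorem stmt17 (K L : ℕ) (hK : 2 ≤ K) (hL : 1 ≤ L) [NeZero L]
    (s : Fin K → ZMod L → ℕ) (hbin : ∀ i t, s i t = 0 ∨ s i t = 1)
    (hTI : IsTI s (K - 1))
    (hR : ∀ (i : Fin K) (τ : Fin K → ZMod L), 0 < R s (K - 1) i τ) :
    IsSI s := by
  have hL0 : (L : ℚ) ≠ 0 := by exact_mod_cast NeZero.ne L
  have hfull : ∀ τ τ' : Fin K → ZMod L,
      Hcorr s Finset.univ τ = Hcorr s Finset.univ τ' := by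
    intro τ τ'
    let i : Fin K := ⟨0, by omega⟩
    have h := hTI i τ τ'
    unfold R at h
    rw [div_left_inj' hL0] at h
    have h' : Rcount s (K - 1) i τ = Rcount s (K - 1) i τ' := by exact_mod_cast h
    have h1 := count_aux hK s hbin i τ
    have h2 := count_aux hK s hbin i τ'
    omega
  have hw : ∀ j, 0 < ∑ x : ZMod L, s j x := by
    intro j
    have h1 := count_aux hK s hbin j 0
    have h2 := hR j 0
    have h3 : Rcount s (K - 1) j 0 ≠ 0 := by
      intro h
      simp [R, h] at h2
    omega
  have key : ∀ B : Finset (Fin K), ∀ τ τ' : Fin K → ZMod L,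
      Hcorr s (Finset.univ \ B) τ = Hcorr s (Finset.univ \ B) τ' := by
    intro B
    induction B using Finset.induction_on with
    | empty => simpa using hfull
    | insert j B hj ih =>
      intro τ τ'
      rw [Finset.sdiff_insert]
      have hm : j ∈ Finset.univ \ B := by simp [hj]
      apply Nat.eq_of_mul_eq_mul_left (hw j)
      rw [← sum_update_aux s _ j hm, ← sum_update_aux s _ j hm]
      exact Finset.sum_congr rfl fun x _ => ih _ _
  intro A _ τ τ'
  have := key (Finset.univ \ A) τ τ'
  simpa using this
end

section
/- Let S = {s_1,…,s_K} (K ≥ 3) be a protocol sequence set in which all sequences have the same duty factor f = n/d with n, d positive integers, gcd(n, d) = 1 and 0 < f < 1. Suppose S is TI with MPR capability γ = K−2 and R_i > 0 for every user i. If gcd(K−2, d) = 1, then S is SI. -/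
open Finset

lemma aux_const {K L : ℕ} [NeZero L] {β : Type*} (F : (Fin K → ZMod L) → β)
    (h : ∀ τ j v, F (Function.update τ j v) = F τ) (τ τ' : Fin K → ZMod L) : F τ' = F τ := by
  have key : ∀ T : Finset (Fin K), F (T.piecewise τ' τ) = F τ := by
    intro T
    induction T using Finset.induction_on with
    | empty => simp
    | insert a T ha ih => rw [Finset.piecewise_insert, h, ih]
  simpa using key Finset.univ

lemma aux_ind {ι : Type*} [DecidableEq ι] (B : Finset ι) (hB : 2 ≤ B.card) (x : ι → ℕ)
    (hx : ∀ i, x i = 0 ∨ x i = 1) :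
    (if ∑ j ∈ B, x j ≤ B.card - 2 then (1 : ℤ) else 0) =
      1 - ∑ j ∈ B, ∏ k ∈ B.erase j, (x k : ℤ) + ((B.card : ℤ) - 1) * ∏ k ∈ B, (x k : ℤ) := by
  by_cases h0 : ∃ a ∈ B, x a = 0
  · obtain ⟨a, ha, hxa⟩ := h0
    have hp : ∏ k ∈ B, (x k : ℤ) = 0 := Finset.prod_eq_zero ha (by simp [hxa])
    have hs : ∑ j ∈ B, ∏ k ∈ B.erase j, (x k : ℤ) = ∏ k ∈ B.erase a, (x k : ℤ) := by
      apply Finset.sum_eq_single_of_mem a ha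
      intro b hb hba
      exact Finset.prod_eq_zero (Finset.mem_erase.2 ⟨hba.symm, ha⟩) (by simp [hxa])
    have hsum : ∑ j ∈ B, x j = ∑ j ∈ B.erase a, x j := by
      rw [← Finset.add_sum_erase B x ha, hxa, zero_add]
    have hc : (B.erase a).card = B.card - 1 := Finset.card_erase_of_mem ha
    rw [hp, hs, hsum]
    by_cases h1 : ∃ b ∈ B.erase a, x b = 0
    · obtain ⟨b, hb, hxb⟩ := h1
      have hp' : ∏ k ∈ B.erase a, (x k : ℤ) = 0 := Finset.prod_eq_zero hb (by simp [hxb])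
      have hle : ∑ j ∈ B.erase a, x j ≤ B.card - 2 := by
        rw [← Finset.add_sum_erase _ x hb, hxb, zero_add]
        have h2 : ((B.erase a).erase b).card = B.card - 1 - 1 := by
          rw [Finset.card_erase_of_mem hb, hc]
        calc ∑ j ∈ (B.erase a).erase b, x j ≤ ∑ j ∈ (B.erase a).erase b, 1 :=
              Finset.sum_le_sum fun i _ => by rcases hx i with h | h <;> omega
          _ = B.card - 1 - 1 := by simp only [Finset.sum_const, smul_eq_mul, mul_one, h2]
          _ ≤ B.card - 2 := by omega
      rw [if_pos hle, hp']; simp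
    · push Not at h1
      have h1' : ∀ b ∈ B.erase a, x b = 1 := fun b hb => (hx b).resolve_left (h1 b hb)
      have hp' : ∏ k ∈ B.erase a, (x k : ℤ) = 1 :=
        Finset.prod_eq_one fun b hb => by simp [h1' b hb]
      have hs' : ∑ j ∈ B.erase a, x j = B.card - 1 := by
        rw [Finset.sum_congr rfl h1', Finset.sum_const, smul_eq_mul, mul_one, hc]
      rw [hs', if_neg (by omega), hp']; simp
  · push Not at h0
    have h1' : ∀ b ∈ B, x b = 1 := fun b hb => (hx b).resolve_left (h0 b hb)
    have hp' : ∏ k ∈ B, (x k : ℤ) = 1 :=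
      Finset.prod_eq_one fun b hb => by simp [h1' b hb]
    have hs' : ∑ j ∈ B, x j = B.card := by
      rw [Finset.sum_congr rfl h1', Finset.sum_const, smul_eq_mul, mul_one]
    have hq : ∑ j ∈ B, ∏ k ∈ B.erase j, (x k : ℤ) = B.card := by
      rw [Finset.sum_congr rfl (fun j _ => Finset.prod_eq_one
        (fun b hb => by simp [h1' b (Finset.mem_of_mem_erase hb)]))]
      simp
    rw [hs', if_neg (by omega), hp', hq]; ring

lemma aux_count {K L : ℕ} (hK : 3 ≤ K) [NeZero L] (s : Fin K → ZMod L → ℕ)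
    (hbin : ∀ i t, s i t = 0 ∨ s i t = 1) (i : Fin K) (τ : Fin K → ZMod L) :
    (Rcount s (K - 2) i τ : ℤ) = ∑ t, (s i t : ℤ)
      - ((∑ j, (Hcorr s (univ.erase j) τ : ℤ)) - Hcorr s (univ.erase i) τ)
      + ((K : ℤ) - 2) * Hcorr s univ τ := by
  have hcard : (univ.erase i : Finset (Fin K)).card = K - 1 := by
    rw [Finset.card_erase_of_mem (mem_univ i)]; simp
  have hC : ∑ t, (s i t : ℤ) = ∑ t, (s i (t + τ i) : ℤ) :=
    (Equiv.sum_comp (Equiv.addRight (τ i)) (fun t => (s i t : ℤ))).symm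
  have hS : (∑ j, (Hcorr s (univ.erase j) τ : ℤ)) - Hcorr s (univ.erase i) τ
      = ∑ j ∈ univ.erase i, (Hcorr s (univ.erase j) τ : ℤ) := by
    rw [← Finset.add_sum_erase univ _ (mem_univ i)]; ring
  rw [hS, hC]
  unfold Rcount Hcorr
  rw [Finset.card_filter]
  push_cast
  rw [Finset.sum_comm, Finset.mul_sum, ← Finset.sum_sub_distrib, ← Finset.sum_add_distrib]
  apply Finset.sum_congr rfl
  intro t _
  have key := aux_ind (univ.erase i) (by omega) (fun k => s k (t + τ k)) (fun k => hbin _ _)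
  have e1 : ∏ k, (s k (t + τ k) : ℤ) = s i (t + τ i) * ∏ k ∈ univ.erase i, (s k (t + τ k) : ℤ) :=
    (Finset.mul_prod_erase univ _ (mem_univ i)).symm
  have e2 : ∑ j ∈ univ.erase i, ∏ k ∈ univ.erase j, (s k (t + τ k) : ℤ)
      = s i (t + τ i) * ∑ j ∈ univ.erase i, ∏ k ∈ (univ.erase i).erase j, (s k (t + τ k) : ℤ) := by
    rw [Finset.mul_sum]
    apply Finset.sum_congr rfl
    intro j hj
    have : i ∈ (univ.erase j : Finset (Fin K)) := by
      simp only [mem_erase, mem_univ, and_true] at hj ⊢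
      exact fun h => hj h.symm
    rw [← Finset.mul_prod_erase _ _ this, Finset.erase_right_comm]
  rw [e1, e2]
  have hK1 : (((univ.erase i : Finset (Fin K)).card : ℕ) : ℤ) = (K : ℤ) - 1 := by
    rw [hcard]; omega
  rw [hK1] at key
  have hK2 : (univ.erase i : Finset (Fin K)).card - 2 = K - 2 - 1 := by omega
  rw [hK2] at key
  rcases hbin i (t + τ i) with h | h
  · simp [h]
  · simp only [h, true_and]
    rw [key]; push_cast; ring

lemma aux_down {K L : ℕ} [NeZero L] (s : Fin K → ZMod L → ℕ) (A : Finset (Fin K)) (j : Fin K)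
    (hj : j ∈ A) (τ : Fin K → ZMod L) :
    ∑ v, Hcorr s A (Function.update τ j v) = Hcorr s (A.erase j) τ * ∑ t, s j t := by
  unfold Hcorr
  rw [Finset.sum_comm, Finset.sum_mul]
  apply Finset.sum_congr rfl
  intro t _
  have : ∑ u, s j u = ∑ v, s j (t + v) :=
    (Equiv.sum_comp (Equiv.addLeft t) (fun u => s j u)).symm
  rw [this, Finset.mul_sum]
  apply Finset.sum_congr rfl
  intro v _
  rw [← Finset.mul_prod_erase A _ hj, mul_comm]
  simp only [Function.update_self]
  congr 1
  apply Finset.prod_congr rfl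
  intro k hk
  rw [Function.update_of_ne (Finset.ne_of_mem_erase hk)]

theorem stmt18 (K L : ℕ) (hK : 3 ≤ K) (hL : 1 ≤ L) [NeZero L]
    (s : Fin K → ZMod L → ℕ) (hbin : ∀ i t, s i t = 0 ∨ s i t = 1)
    (n d : ℕ) (hn : 0 < n) (hd : 0 < d) (hcop : Nat.Coprime n d)
    (hf0 : 0 < (n : ℚ) / (d : ℚ)) (hf1 : (n : ℚ) / (d : ℚ) < 1)
    (hduty : ∀ i, duty (s i) = (n : ℚ) / (d : ℚ))
    (hTI : IsTI s (K - 2))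
    (hR : ∀ (i : Fin K) (τ : Fin K → ZMod L), 0 < R s (K - 2) i τ)
    (hgcd : Nat.gcd (K - 2) d = 1) :
    IsSI s := by
  have hLq : (L : ℚ) ≠ 0 := by exact_mod_cast NeZero.ne L
  have hRc : ∀ i τ τ', Rcount s (K - 2) i τ = Rcount s (K - 2) i τ' := by
    intro i τ τ'
    have h := hTI i τ τ'
    unfold R at h
    rw [div_left_inj' hLq] at h
    exact_mod_cast h
  have hw : ∀ i, 0 < ∑ t, s i t := by
    intro i
    rcases Nat.eq_zero_or_pos (∑ t, s i t) with h | h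
    · exfalso
      have h1 := hduty i
      unfold duty at h1
      have h2 : (∑ t, (s i t : ℚ)) = 0 := by exact_mod_cast h
      rw [h2, zero_div] at h1
      rw [← h1] at hf0
      exact lt_irrefl _ hf0
    · exact h
  have hdiff : ∀ i j τ τ', (Hcorr s (univ.erase i) τ : ℤ) - Hcorr s (univ.erase i) τ'
      = Hcorr s (univ.erase j) τ - Hcorr s (univ.erase j) τ' := by
    intro i j τ τ'
    have a1 := aux_count hK s hbin i τ
    have a2 := aux_count hK s hbin i τ'
    have b1 := aux_count hK s hbin j τ
    have b2 := aux_count hK s hbin j τ'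
    rw [hRc i τ τ'] at a1
    rw [hRc j τ τ'] at b1
    linarith
  have hown : ∀ j τ v, Hcorr s (univ.erase j) (Function.update τ j v)
      = Hcorr s (univ.erase j) τ := by
    intro j τ v
    unfold Hcorr
    apply Finset.sum_congr rfl
    intro t _
    apply Finset.prod_congr rfl
    intro k hk
    rw [Function.update_of_ne (Finset.ne_of_mem_erase hk)]
  have hH1 : ∀ i τ τ', Hcorr s (univ.erase i) τ' = Hcorr s (univ.erase i) τ := by
    intro i τ τ'
    apply aux_const (fun τ => Hcorr s (univ.erase i) τ)
    intro τ j v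
    have h := hdiff i j (Function.update τ j v) τ
    rw [hown] at h
    have h' : (Hcorr s (univ.erase i) (Function.update τ j v) : ℤ)
      = Hcorr s (univ.erase i) τ := by linarith
    exact_mod_cast h'
  have hall : ∀ τ τ', Hcorr s univ τ = Hcorr s univ τ' := by
    intro τ τ'
    have i : Fin K := ⟨0, by omega⟩
    have a1 := aux_count hK s hbin i τ
    have a2 := aux_count hK s hbin i τ'
    rw [hRc i τ τ', a2] at a1
    simp only [fun j => hH1 j τ τ'] at a1
    have hne : (K : ℤ) - 2 ≠ 0 := by omega
    have h' : (Hcorr s univ τ : ℤ) = Hcorr s univ τ' :=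
      mul_left_cancel₀ hne (by linarith)
    exact_mod_cast h'
  have hB : ∀ B : Finset (Fin K), ∀ τ τ', Hcorr s (univ \ B) τ = Hcorr s (univ \ B) τ' := by
    intro B
    induction B using Finset.induction_on with
    | empty => simpa using hall
    | insert a B ha ih =>
      intro τ τ'
      have hmem : a ∈ univ \ B := by simp [ha]
      have h1 := aux_down s (univ \ B) a hmem τ
      have h2 := aux_down s (univ \ B) a hmem τ'
      rw [Finset.sum_congr rfl (fun v _ => ih (Function.update τ a v) (Function.update τ' a v)),
        h2] at h1
      have h3 := Nat.eq_of_mul_eq_mul_right (hw a) h1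
      have h4 : univ \ insert a B = (univ \ B).erase a := by
        ext x; simp [not_or]
      rw [h4, h3]
  intro A _ τ τ'
  have h := hB (univ \ A) τ τ'
  simpa using h
end
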